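/- arXiv:2308.15416 — 5 statements merged into one kernel-verified Lean document; each statement's English description precedes it below -/
import Mathlib

section
/- Let G be a planar graph, let G_1, …, G_p be its path components, i.e., its connected components that are isomorphic to a path with at least one edge, and let G' be the graph obtained from G by deleting these p components. If G' contains at least one edge, then lin(G) = lin(G'); if G' contains no edge but G does, then lin(G) = 1. -/
/-!
Restricting a drawing of `G` to the graph `G'` left after deleting the path components keeps every
cover by lines, so `lin(G') ≤ lin(G)`. Conversely, take a drawing of `G'` and any line `L`. The
drawing is bounded, so `L` contains a ray avoiding the convex hull of the vertex images. All path
components can be laid out one after another along this ray: number their vertices injectively by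
natural numbers so that adjacent vertices receive consecutive numbers
(`exists_consecutive_numbering`), and put the vertex numbered `k` at parameter `T + k` of `L`, where
`T` is large (`exists_extension`). If `L` belongs to the given cover, the same lines cover the
extended drawing; and if `G'` has no edge, then `L` alone covers the extended drawing, while no
nonempty set of edges is covered by zero lines.
-/


open Set

variable {V : Type*}

/-- A planar straight-line drawing of a simple graph `G` in the plane `ℝ × ℝ`. -/
structure IsPlanarDrawing (G : SimpleGraph V) (ρ : V → ℝ × ℝ) : Prop where
  inj : Function.Injective ρ
  edge_inter : ∀ ⦃u v x y : V⦄, G.Adj u v → G.Adj x y → s(u, v) ≠ s(x, y) →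
    ∀ p : ℝ × ℝ, p ∈ segment ℝ (ρ u) (ρ v) → p ∈ segment ℝ (ρ x) (ρ y) →
      ∃ w : V, (w = u ∨ w = v) ∧ (w = x ∨ w = y) ∧ p = ρ w
  vertex_not_on_edge : ∀ ⦃u v w : V⦄, G.Adj u v → w ≠ u → w ≠ v →
    ρ w ∉ segment ℝ (ρ u) (ρ v)

/-- Two incident edges `e = {u,v}` and `f = {v,w}` are aligned in the drawing `ρ`
if the image of the shared vertex `v` lies strictly between the images of `u` and `w`. -/
def Aligned (G : SimpleGraph V) (ρ : V → ℝ × ℝ) (e f : Sym2 V) : Prop :=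
  ∃ u v w : V, u ≠ w ∧ G.Adj u v ∧ G.Adj v w ∧ e = s(u, v) ∧ f = s(v, w) ∧
    ρ v ∈ openSegment ℝ (ρ u) (ρ w)

/-- The number of (unordered) pairs of incident edges that are aligned in the drawing `ρ`. -/
noncomputable def numAlignedPairs (G : SimpleGraph V) (ρ : V → ℝ × ℝ) : ℕ :=
  Set.ncard {q : Sym2 (Sym2 V) | ∃ e f : Sym2 V, q = s(e, f) ∧ Aligned G ρ e f}

/-- The number of segments of the drawing `ρ`: the number of equivalence classes of edges
under the reflexive-transitive closure of the alignment relation. -/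
noncomputable def numSegments (G : SimpleGraph V) (ρ : V → ℝ × ℝ) : ℕ :=
  Set.ncard {S : Set (Sym2 V) |
    ∃ e ∈ G.edgeSet, S = {f | Relation.ReflTransGen (Aligned G ρ) e f}}

/-- The segment number of `G`: the minimum number of segments over all
planar straight-line drawings of `G`. -/
noncomputable def segNumber (G : SimpleGraph V) : ℕ :=
  sInf {n : ℕ | ∃ ρ : V → ℝ × ℝ, IsPlanarDrawing G ρ ∧ numSegments G ρ = n}

/-- A line in the plane. -/
def IsLine (L : Set (ℝ × ℝ)) : Prop :=
  ∃ a b : ℝ × ℝ, a ≠ b ∧ L = {p : ℝ × ℝ | ∃ t : ℝ, p = a + t • (b - a)}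

/-- The line cover number of `G`: the minimum, over all planar straight-line drawings of `G`,
of the minimum number of lines whose union contains the drawn segments of all edges. -/
noncomputable def linNumber (G : SimpleGraph V) : ℕ :=
  sInf {n : ℕ | ∃ ρ : V → ℝ × ℝ, IsPlanarDrawing G ρ ∧
    ∃ 𝓛 : Finset (Set (ℝ × ℝ)), 𝓛.card = n ∧ (∀ L ∈ 𝓛, IsLine L) ∧
      ∀ ⦃u v : V⦄, G.Adj u v → segment ℝ (ρ u) (ρ v) ⊆ ⋃ L ∈ 𝓛, L}

/-- The `k`-banana: vertices `a = Sum.inl false`, `b = Sum.inl true` (covering vertices) and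
`c i = Sum.inr i` for `i : Fin k` (independent vertices); edges `{a, c i}` and `{c i, b}`. -/
def banana (k : ℕ) : SimpleGraph (Bool ⊕ Fin k) :=
  SimpleGraph.fromRel fun x y =>
    ∃ i : Fin k, (x = Sum.inl false ∨ x = Sum.inl true) ∧ y = Sum.inr i

/-- A connected component of `G` is a path component if its induced subgraph is isomorphic
to a path graph with at least two vertices (i.e., at least one edge). -/
def IsPathComponent (G : SimpleGraph V) (c : G.ConnectedComponent) : Prop :=
  ∃ n : ℕ, 2 ≤ n ∧ Nonempty (G.induce c.supp ≃g SimpleGraph.pathGraph n)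

/-! ### Consecutive integers on a line -/

/-- If vertices are numbered injectively and adjacent ones consecutively, then the unit intervals of
two distinct edges meet only in the number of a common endpoint. -/
lemma exists_common_endpoint {S : Set V} {f : V → ℕ} (hf : Set.InjOn f S) {u v x y : V}
    (hu : u ∈ S) (hv : v ∈ S) (hx : x ∈ S) (hy : y ∈ S)
    (huv : f u = f v + 1 ∨ f v = f u + 1) (hxy : f x = f y + 1 ∨ f y = f x + 1)
    (hne : s(u, v) ≠ s(x, y)) {r : ℝ} (h1 : r ∈ Set.uIcc (f u : ℝ) (f v))
    (h2 : r ∈ Set.uIcc (f x : ℝ) (f y)) :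
    ∃ w : V, (w = u ∨ w = v) ∧ (w = x ∨ w = y) ∧ r = f w := by
  have key : ∀ u v x y : V, u ∈ S → v ∈ S → x ∈ S → y ∈ S → f v = f u + 1 → f y = f x + 1 →
      s(u, v) ≠ s(x, y) → r ∈ Set.uIcc (f u : ℝ) (f v) → r ∈ Set.uIcc (f x : ℝ) (f y) →
      ∃ w : V, (w = u ∨ w = v) ∧ (w = x ∨ w = y) ∧ r = f w := by
    clear hu hv hx hy huv hxy hne h1 h2
    intro u v x y hu hv hx hy huv hxy hne h1 h2
    have huv' : (f v : ℝ) = f u + 1 := by exact_mod_cast huv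
    have hxy' : (f y : ℝ) = f x + 1 := by exact_mod_cast hxy
    rw [Set.uIcc_of_le (by linarith)] at h1 h2
    have hux : f u ≠ f x := by
      intro h
      have e1 := hf hu hx h
      have e2 := hf hv hy (by omega)
      exact hne (by rw [e1, e2])
    rcases Nat.lt_or_gt_of_ne hux with h | h
    · have h3 : (f u : ℝ) + 1 ≤ f x := by exact_mod_cast h
      have h4 : (f v : ℝ) = f x := by linarith [h1.2, h2.1]
      have e : v = x := hf hv hx (by exact_mod_cast h4)
      exact ⟨v, Or.inr rfl, Or.inl e, by linarith [h1.2, h2.1]⟩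
    · have h3 : (f x : ℝ) + 1 ≤ f u := by exact_mod_cast h
      have h4 : (f u : ℝ) = f y := by linarith [h2.2, h1.1]
      have e : u = y := hf hu hy (by exact_mod_cast h4)
      exact ⟨u, Or.inl rfl, Or.inr e, by linarith [h2.2, h1.1]⟩
  rcases huv with huv | huv <;> rcases hxy with hxy | hxy
  · obtain ⟨w, a, b, c⟩ := key v u y x hv hu hy hx huv hxy
      (by rwa [Sym2.eq_swap, Sym2.eq_swap (a := y)]) (by rwa [Set.uIcc_comm])
      (by rwa [Set.uIcc_comm])
    exact ⟨w, a.symm, b.symm, c⟩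
  · obtain ⟨w, a, b, c⟩ := key v u x y hv hu hx hy huv hxy
      (by rwa [Sym2.eq_swap]) (by rwa [Set.uIcc_comm]) h2
    exact ⟨w, a.symm, b, c⟩
  · obtain ⟨w, a, b, c⟩ := key u v y x hu hv hy hx huv hxy
      (by rwa [Sym2.eq_swap (a := y)]) h1 (by rwa [Set.uIcc_comm])
    exact ⟨w, a, b.symm, c⟩
  · exact key u v x y hu hv hx hy huv hxy hne h1 h2

/-- A numbered vertex in the closed interval spanned by two consecutive numbers is an endpoint. -/
lemma eq_endpoint_of_mem_uIcc {m n k : ℕ} (h : m = n + 1 ∨ n = m + 1)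
    (hk : (k : ℝ) ∈ Set.uIcc (m : ℝ) n) : k = m ∨ k = n := by
  rcases h with h | h
  · have h' : (n : ℝ) ≤ m := by exact_mod_cast (by omega : n ≤ m)
    rw [Set.uIcc_of_ge h'] at hk
    have a : n ≤ k := by exact_mod_cast hk.1
    have b : k ≤ m := by exact_mod_cast hk.2
    omega
  · have h' : (m : ℝ) ≤ n := by exact_mod_cast (by omega : m ≤ n)
    rw [Set.uIcc_of_le h'] at hk
    have a : m ≤ k := by exact_mod_cast hk.1
    have b : k ≤ n := by exact_mod_cast hk.2
    omega

/-! ### Extending a drawing along a ray -/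

/-- A line eventually leaves every bounded set. -/
lemma exists_ray_avoiding {S : Set (ℝ × ℝ)} (hS : Bornology.IsBounded S) {a b : ℝ × ℝ}
    (hab : a ≠ b) : ∃ T : ℝ, ∀ t : ℝ, T ≤ t → a + t • (b - a) ∉ S := by
  obtain ⟨R, hR⟩ := hS.exists_norm_le
  have hpos : 0 < ‖b - a‖ := norm_pos_iff.2 (sub_ne_zero.2 hab.symm)
  refine ⟨(|R| + ‖a‖ + 1) / ‖b - a‖, fun t ht hmem => ?_⟩
  have h1 := hR _ hmem
  rw [div_le_iff₀ hpos] at ht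
  have ht0 : t * ‖b - a‖ ≤ ‖t • (b - a)‖ := by
    rw [norm_smul, Real.norm_eq_abs]
    exact mul_le_mul_of_nonneg_right (le_abs_self t) hpos.le
  have h2 : ‖t • (b - a)‖ ≤ ‖a + t • (b - a)‖ + ‖a‖ := by
    have := norm_sub_le (a + t • (b - a)) a
    rwa [add_sub_cancel_left] at this
  linarith [le_abs_self R]

/-- A drawing of the part of `G` on a union `S` of components extends to `G` by placing the
remaining vertices on a prescribed line, provided these have a numbering in which adjacent vertices
are consecutive. -/
lemma exists_extension [Finite V] (G : SimpleGraph V) (S : Set V)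
    (hS : ∀ u v, G.Adj u v → (u ∈ S ↔ v ∈ S)) (f : V → ℕ) (hf : Set.InjOn f Sᶜ)
    (hadj : ∀ u v, u ∉ S → v ∉ S → G.Adj u v → f u = f v + 1 ∨ f v = f u + 1)
    (ρ' : S → ℝ × ℝ) (hρ' : IsPlanarDrawing (G.induce S) ρ') {a b : ℝ × ℝ} (hab : a ≠ b) :
    ∃ ρ : V → ℝ × ℝ, IsPlanarDrawing G ρ ∧ (∀ v : S, ρ v = ρ' v) ∧
      ∀ v ∉ S, ∃ t : ℝ, ρ v = a + t • (b - a) := by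
  classical
  obtain ⟨T, hT⟩ := exists_ray_avoiding
    (isBounded_convexHull.2 (Set.finite_range ρ').isBounded) hab
  set K := convexHull ℝ (Set.range ρ') with hK
  -- the ray as an affine map, with the origin of the parameter moved to `T`
  let φ : ℝ →ᵃ[ℝ] ℝ × ℝ := AffineMap.lineMap (a + T • (b - a)) (a + T • (b - a) + (b - a))
  have hφ : ∀ t, φ t = a + (T + t) • (b - a) := by
    intro t
    simp only [φ, AffineMap.lineMap_apply, vsub_eq_sub, vadd_eq_add]
    module
  have hφinj : Function.Injective φ := by
    intro s t h
    rw [hφ, hφ] at h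
    have := smul_left_injective ℝ (sub_ne_zero.2 hab.symm) (add_left_cancel h)
    linarith
  have hφK : ∀ t, 0 ≤ t → φ t ∉ K := by
    intro t ht
    rw [hφ]
    exact hT _ (by linarith)
  let ρ : V → ℝ × ℝ := fun v => if h : v ∈ S then ρ' ⟨v, h⟩ else φ (f v)
  have hin : ∀ v (h : v ∈ S), ρ v = ρ' ⟨v, h⟩ := fun v h => dif_pos h
  have hout : ∀ v, v ∉ S → ρ v = φ (f v) := fun v h => dif_neg h
  have hinK : ∀ v, v ∈ S → ρ v ∈ K := by
    intro v h
    rw [hin v h]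
    exact subset_convexHull _ _ ⟨_, rfl⟩
  have hsegK : ∀ u v, u ∈ S → v ∈ S → segment ℝ (ρ u) (ρ v) ⊆ K := fun u v hu hv =>
    (convex_convexHull ℝ _).segment_subset (hinK u hu) (hinK v hv)
  have hsegout : ∀ u v, u ∉ S → v ∉ S →
      segment ℝ (ρ u) (ρ v) = φ '' Set.uIcc (f u : ℝ) (f v) := by
    intro u v hu hv
    rw [hout u hu, hout v hv, ← segment_eq_uIcc, image_segment]
  have hsegoutK : ∀ u v, u ∉ S → v ∉ S → ∀ p ∈ segment ℝ (ρ u) (ρ v), p ∉ K := by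
    intro u v hu hv p hp
    rw [hsegout u v hu hv] at hp
    obtain ⟨t, ht, rfl⟩ := hp
    refine hφK t (le_trans (le_min ?_ ?_) ht.1) <;> exact Nat.cast_nonneg _
  refine ⟨ρ, ⟨?_, ?_, ?_⟩, fun v => hin v v.2, fun v hv => ⟨T + f v, by rw [hout v hv, hφ]⟩⟩
  · intro u v h
    by_cases hu : u ∈ S <;> by_cases hv : v ∈ S
    · rw [hin u hu, hin v hv] at h
      exact congrArg Subtype.val (hρ'.inj h)
    · exact absurd (h ▸ hinK u hu) (hsegoutK v v hv hv _ (left_mem_segment ℝ _ _))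
    · exact absurd (h ▸ hinK v hv) (hsegoutK u u hu hu _ (left_mem_segment ℝ _ _))
    · rw [hout u hu, hout v hv] at h
      exact hf hu hv (by exact_mod_cast hφinj h)
  · intro u v x y huv hxy hne p hp hq
    by_cases hu : u ∈ S <;> by_cases hx : x ∈ S
    · have hv := (hS u v huv).1 hu
      have hy := (hS x y hxy).1 hx
      rw [hin u hu, hin v hv] at hp
      rw [hin x hx, hin y hy] at hq
      obtain ⟨w, h1, h2, h3⟩ := hρ'.edge_inter (u := ⟨u, hu⟩) (v := ⟨v, hv⟩) (x := ⟨x, hx⟩)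
        (y := ⟨y, hy⟩) huv hxy (fun h => hne (by simpa using congrArg (Sym2.map Subtype.val) h))
        p hp hq
      refine ⟨w, ?_, ?_, ?_⟩
      · exact h1.imp (congrArg Subtype.val) (congrArg Subtype.val)
      · exact h2.imp (congrArg Subtype.val) (congrArg Subtype.val)
      · rw [hin w w.2]; exact h3
    · have hv := (hS u v huv).1 hu
      have hy := mt (hS x y hxy).2 hx
      exact absurd (hsegK u v hu hv hp) (hsegoutK x y hx hy p hq)
    · have hv := mt (hS u v huv).2 hu
      have hy := (hS x y hxy).1 hx
      exact absurd (hsegK x y hx hy hq) (hsegoutK u v hu hv p hp)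
    · have hv := mt (hS u v huv).2 hu
      have hy := mt (hS x y hxy).2 hx
      rw [hsegout u v hu hv] at hp
      rw [hsegout x y hx hy] at hq
      obtain ⟨r, hr, rfl⟩ := hp
      obtain ⟨r', hr', e⟩ := hq
      obtain rfl := hφinj e
      obtain ⟨w, h1, h2, h3⟩ := exists_common_endpoint hf hu hv hx hy
        (hadj u v hu hv huv) (hadj x y hx hy hxy) hne hr hr'
      refine ⟨w, h1, h2, ?_⟩
      have hw : w ∉ S := by rcases h1 with rfl | rfl <;> assumption
      rw [hout w hw, h3]
  · intro u v w huv hwu hwv hmem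
    by_cases hu : u ∈ S <;> by_cases hw : w ∈ S
    · have hv := (hS u v huv).1 hu
      rw [hin u hu, hin v hv, hin w hw] at hmem
      exact hρ'.vertex_not_on_edge (u := ⟨u, hu⟩) (v := ⟨v, hv⟩) (w := ⟨w, hw⟩) huv
        (fun h => hwu (congrArg Subtype.val h)) (fun h => hwv (congrArg Subtype.val h)) hmem
    · have hv := (hS u v huv).1 hu
      exact hsegoutK w w hw hw _ (left_mem_segment ℝ _ _) (hsegK u v hu hv hmem)
    · have hv := mt (hS u v huv).2 hu
      exact hsegoutK u v hu hv _ hmem (hinK w hw)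
    · have hv := mt (hS u v huv).2 hu
      rw [hsegout u v hu hv, hout w hw] at hmem
      obtain ⟨r, hr, e⟩ := hmem
      obtain rfl := hφinj e
      rcases eq_endpoint_of_mem_uIcc (hadj u v hu hv huv) hr with h | h
      · exact hwu (hf hw hu h)
      · exact hwv (hf hw hv h)

/-! ### Numbering the path components -/

/-- The vertices of the path components can be numbered injectively, with adjacent vertices
receiving consecutive numbers: the components get disjoint blocks of `|V|` numbers each. -/
lemma exists_consecutive_numbering [Fintype V] (G : SimpleGraph V) :
    ∃ f : V → ℕ, Set.InjOn f {v : V | ¬ IsPathComponent G (G.connectedComponentMk v)}ᶜ ∧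
      ∀ u v, IsPathComponent G (G.connectedComponentMk u) → G.Adj u v →
        f u = f v + 1 ∨ f v = f u + 1 := by
  classical
  have hc : ∀ c : G.ConnectedComponent, ∃ g : V → ℕ, IsPathComponent G c →
      (∀ v ∈ c.supp, g v < Fintype.card V) ∧ Set.InjOn g c.supp ∧
      ∀ u ∈ c.supp, ∀ v ∈ c.supp, G.Adj u v → g u = g v + 1 ∨ g v = g u + 1 := by
    intro c
    by_cases h : IsPathComponent G c
    swap
    · exact ⟨fun _ => 0, fun h' => absurd h' h⟩
    obtain ⟨n, -, ⟨e⟩⟩ := h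
    have hn : n ≤ Fintype.card V := by
      have := Fintype.card_le_of_injective (fun i : Fin n => (e.symm i : V))
        (Subtype.val_injective.comp e.symm.injective)
      simpa using this
    let g : V → ℕ := fun v => if h : v ∈ c.supp then (e ⟨v, h⟩).val else 0
    have hg : ∀ v (h : v ∈ c.supp), g v = (e ⟨v, h⟩).val := fun v h => dif_pos h
    refine ⟨g, fun _ => ⟨?_, ?_, ?_⟩⟩
    · intro v hv
      rw [hg v hv]
      exact lt_of_lt_of_le (e ⟨v, hv⟩).isLt hn
    · intro u hu v hv huv
      rw [hg u hu, hg v hv] at huv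
      exact congrArg Subtype.val (e.injective (Fin.ext huv))
    · intro u hu v hv huv
      rw [hg u hu, hg v hv]
      have h1 : (SimpleGraph.pathGraph n).Adj (e ⟨u, hu⟩) (e ⟨v, hv⟩) :=
        e.map_rel_iff.2 huv
      rw [SimpleGraph.pathGraph_adj] at h1
      omega
  choose g hg using hc
  obtain ⟨m, ⟨idx⟩⟩ := Finite.exists_equiv_fin G.ConnectedComponent
  refine ⟨fun v => g (G.connectedComponentMk v) v +
    Fintype.card V * (idx (G.connectedComponentMk v)).val, ?_, ?_⟩
  · intro u hu v hv huv
    have hu' : IsPathComponent G (G.connectedComponentMk u) := not_not.1 hu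
    have hv' : IsPathComponent G (G.connectedComponentMk v) := not_not.1 hv
    have lu := (hg _ hu').1 u rfl
    have lv := (hg _ hv').1 v rfl
    have hpos : 0 < Fintype.card V := by omega
    simp only at huv
    have hdiv := congrArg (· / Fintype.card V) huv
    simp only [Nat.add_mul_div_left _ _ hpos, Nat.div_eq_of_lt lu, Nat.div_eq_of_lt lv,
      zero_add] at hdiv
    have hcc : G.connectedComponentMk u = G.connectedComponentMk v :=
      idx.injective (Fin.ext hdiv)
    rw [hcc] at huv
    exact (hg _ hv').2.1 hcc rfl (Nat.add_right_cancel huv)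
  · intro u v hu huv
    have hcc : G.connectedComponentMk v = G.connectedComponentMk u :=
      (SimpleGraph.ConnectedComponent.sound huv.reachable).symm
    have := (hg _ hu).2.2 u rfl v hcc huv
    simp only [hcc]
    omega

/-! ### Restrictions and line covers -/

lemma IsPlanarDrawing.induce {G : SimpleGraph V} {ρ : V → ℝ × ℝ} (h : IsPlanarDrawing G ρ)
    (S : Set V) : IsPlanarDrawing (G.induce S) (fun v : S => ρ v) where
  inj := h.inj.comp Subtype.val_injective
  edge_inter := by
    intro u v x y huv hxy hne p hp hq
    obtain ⟨w, h1, h2, h3⟩ := h.edge_inter (u := u) (v := v) (x := x) (y := y) huv hxy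
      (fun e => hne (Sym2.map.injective Subtype.val_injective (by simpa using e))) p hp hq
    have hw : w ∈ S := by rcases h1 with rfl | rfl <;> exact Subtype.property _
    exact ⟨⟨w, hw⟩, h1.imp Subtype.ext Subtype.ext, h2.imp Subtype.ext Subtype.ext, h3⟩
  vertex_not_on_edge := by
    intro u v w huv hwu hwv
    exact h.vertex_not_on_edge huv (fun e => hwu (Subtype.ext e)) (fun e => hwv (Subtype.ext e))

lemma IsLine.convex {L : Set (ℝ × ℝ)} (hL : IsLine L) : Convex ℝ L := by
  obtain ⟨a, b, -, rfl⟩ := hL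
  rintro _ ⟨s, rfl⟩ _ ⟨t, rfl⟩ α β - - h
  refine ⟨α * s + β * t, ?_⟩
  obtain rfl : α = 1 - β := by linarith
  module

/-- A finite graph with a drawing has a drawing with a finite line cover, so that the set defining
`linNumber` is nonempty and its infimum is attained. -/
lemma exists_lineCover [Finite V] {G : SimpleGraph V} {ρ : V → ℝ × ℝ} (hρ : IsPlanarDrawing G ρ) :
    ∃ 𝓛 : Finset (Set (ℝ × ℝ)), (∀ L ∈ 𝓛, IsLine L) ∧
      ∀ ⦃u v : V⦄, G.Adj u v → segment ℝ (ρ u) (ρ v) ⊆ ⋃ L ∈ 𝓛, L := by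
  classical
  let l : V × V → Set (ℝ × ℝ) := fun q => {p | ∃ t : ℝ, p = ρ q.1 + t • (ρ q.2 - ρ q.1)}
  have hfin : (l '' {q | G.Adj q.1 q.2}).Finite := Set.toFinite _
  refine ⟨hfin.toFinset, ?_, ?_⟩
  · intro L hL
    rw [Set.Finite.mem_toFinset] at hL
    obtain ⟨q, hq, rfl⟩ := hL
    exact ⟨_, _, fun h => hq.ne (hρ.inj h), rfl⟩
  · intro u v huv p hp
    rw [segment_eq_image'] at hp
    obtain ⟨t, -, rfl⟩ := hp
    simp only [Set.mem_iUnion]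
    exact ⟨l (u, v), hfin.mem_toFinset.2 ⟨(u, v), huv, rfl⟩, t, rfl⟩

/-- Given a drawing of the graph left after deleting the path components and a line cover of it
containing at least one line, the same lines cover some drawing of the whole graph. -/
lemma exists_extension_cover [Fintype V] (G : SimpleGraph V)
    {ρ' : {v : V | ¬ IsPathComponent G (G.connectedComponentMk v)} → ℝ × ℝ}
    (hρ' : IsPlanarDrawing (G.induce {v : V | ¬ IsPathComponent G (G.connectedComponentMk v)}) ρ')
    {𝓛 : Finset (Set (ℝ × ℝ))} (hne : 𝓛.Nonempty) (hline : ∀ L ∈ 𝓛, IsLine L)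
    (hcov : ∀ ⦃u v⦄,
      (G.induce {v : V | ¬ IsPathComponent G (G.connectedComponentMk v)}).Adj u v →
        segment ℝ (ρ' u) (ρ' v) ⊆ ⋃ L ∈ 𝓛, L) :
    ∃ ρ : V → ℝ × ℝ, IsPlanarDrawing G ρ ∧
      ∀ ⦃u v : V⦄, G.Adj u v → segment ℝ (ρ u) (ρ v) ⊆ ⋃ L ∈ 𝓛, L := by
  obtain ⟨L, hL⟩ := hne
  obtain ⟨a, b, hab, hLab⟩ := hline L hL
  obtain ⟨f, hf, hadj⟩ := exists_consecutive_numbering G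
  have hS : ∀ u v, G.Adj u v →
      (u ∈ {v : V | ¬ IsPathComponent G (G.connectedComponentMk v)} ↔
        v ∈ {v : V | ¬ IsPathComponent G (G.connectedComponentMk v)}) := by
    intro u v huv
    simp only [Set.mem_ofPred_eq, SimpleGraph.ConnectedComponent.sound huv.reachable]
  obtain ⟨ρ, hρ, hin, hout⟩ := exists_extension G _ hS f hf
    (fun u v hu _ huv => hadj u v (not_not.1 hu) huv) ρ' hρ' hab
  refine ⟨ρ, hρ, fun u v huv => ?_⟩
  by_cases hu : u ∈ {v : V | ¬ IsPathComponent G (G.connectedComponentMk v)}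
  · have hv := (hS u v huv).1 hu
    have := hcov (u := ⟨u, hu⟩) (v := ⟨v, hv⟩) huv
    rwa [← hin, ← hin] at this
  · have hv := mt (hS u v huv).2 hu
    have hmem : ∀ w, w ∉ {v : V | ¬ IsPathComponent G (G.connectedComponentMk v)} → ρ w ∈ L := by
      intro w hw
      rw [hLab]
      exact hout w hw
    exact ((hline L hL).convex.segment_subset (hmem u hu) (hmem v hv)).trans
      (Set.subset_biUnion_of_mem (u := fun L => L) hL)

lemma cover_nonempty {G : SimpleGraph V} {ρ : V → ℝ × ℝ} {𝓛 : Finset (Set (ℝ × ℝ))} {u v : V}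
    (huv : G.Adj u v)
    (hcov : ∀ ⦃u v : V⦄, G.Adj u v → segment ℝ (ρ u) (ρ v) ⊆ ⋃ L ∈ 𝓛, L) : 𝓛.Nonempty := by
  have h := hcov huv (left_mem_segment ℝ _ _)
  simp only [Set.mem_iUnion] at h
  obtain ⟨L, hL, -⟩ := h
  exact ⟨L, hL⟩

/-- let `G'` be obtained from a planar graph `G` by deleting its path components.
If `G'` contains at least one edge, then `lin(G) = lin(G')`; if `G'` contains no edge but `G`
does, then `lin(G) = 1`. -/
theorem linNumber_del_path_components {V : Type*} [Fintype V] (G : SimpleGraph V)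
    (hG : ∃ ρ : V → ℝ × ℝ, IsPlanarDrawing G ρ) :
    ((∃ u v, (G.induce {v : V | ¬ IsPathComponent G (G.connectedComponentMk v)}).Adj u v) →
      linNumber G =
        linNumber (G.induce {v : V | ¬ IsPathComponent G (G.connectedComponentMk v)})) ∧
    ((¬ ∃ u v, (G.induce {v : V | ¬ IsPathComponent G (G.connectedComponentMk v)}).Adj u v) →
      (∃ u v, G.Adj u v) → linNumber G = 1) := by
  obtain ⟨ρ₀, hρ₀⟩ := hG
  have hρ₁ := hρ₀.induce {v : V | ¬ IsPathComponent G (G.connectedComponentMk v)}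
  obtain ⟨𝓛₀, hl₀, hc₀⟩ := exists_lineCover hρ₀
  obtain ⟨𝓛₁, hl₁, hc₁⟩ := exists_lineCover hρ₁
  refine ⟨?_, ?_⟩
  · rintro ⟨u, v, huv⟩
    apply le_antisymm
    · refine le_csInf ⟨_, _, hρ₁, 𝓛₁, rfl, hl₁, hc₁⟩ ?_
      rintro _ ⟨ρ', hρ', 𝓛, rfl, hl, hc⟩
      obtain ⟨ρ, hρ, hcov⟩ := exists_extension_cover G hρ' (cover_nonempty huv hc) hl hc
      exact Nat.sInf_le ⟨ρ, hρ, 𝓛, rfl, hl, hcov⟩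
    · refine le_csInf ⟨_, _, hρ₀, 𝓛₀, rfl, hl₀, hc₀⟩ ?_
      rintro _ ⟨ρ, hρ, 𝓛, rfl, hl, hc⟩
      exact Nat.sInf_le ⟨_, hρ.induce _, 𝓛, rfl, hl, fun u v huv => hc huv⟩
  · rintro hno ⟨u, v, huv⟩
    apply le_antisymm
    · have hline : IsLine {p : ℝ × ℝ | ∃ t : ℝ, p = 0 + t • ((1, 0) - 0)} :=
        ⟨0, (1, 0), by simp [Prod.ext_iff], rfl⟩
      obtain ⟨ρ, hρ, hcov⟩ := exists_extension_cover G hρ₁ (Finset.singleton_nonempty _)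
        (fun L hL => by rw [Finset.mem_singleton.1 hL]; exact hline)
        (fun x y hxy => absurd ⟨x, y, hxy⟩ hno)
      exact Nat.sInf_le ⟨ρ, hρ, _, Finset.card_singleton _,
        fun L hL => by rw [Finset.mem_singleton.1 hL]; exact hline, hcov⟩
    · refine le_csInf ⟨_, _, hρ₀, 𝓛₀, rfl, hl₀, hc₀⟩ ?_
      rintro _ ⟨ρ, hρ, 𝓛, rfl, hl, hc⟩
      exact (cover_nonempty huv hc).card_pos
end

section
/- If G is a planar graph none of whose connected components is a path (in particular, no component is a single vertex), then seg(G) ≤ lin(G)². -/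
/-!
Fix a drawing `ρ` realising the line cover number, with a set `𝓛` of `k` covering lines; the same
drawing has at most `k ^ 2` segments. Each edge lies on a single line of `𝓛`
(`exists_line_of_covered`), and two distinct edges at a vertex that lie on the same line are
aligned (`aligned_of_collinear`), so a segment is determined by its line together with any one of
its vertices.

The hypothesis on components enters through `exists_crossing`: every segment on a line `L ∈ 𝓛` has
a vertex on another line `L' ∈ 𝓛`. Otherwise all edges at vertices of the segment lie on `L` and
hence belong to the segment, so the whole connected component is drawn on `L`; a connected graph
drawn on a line is a path (`nonempty_iso_pathGraph`). As `L ∩ L'` is a single point, the pair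
`(L, L')` determines the vertex and then the segment, so there are at most `k ^ 2` segments.
-/

open Set

variable {V : Type*}

theorem isLine_iff (L : Set (ℝ × ℝ)) :
    IsLine L ↔ ∃ a b : ℝ × ℝ, a ≠ b ∧ L = range (AffineMap.lineMap a b : ℝ →ᵃ[ℝ] ℝ × ℝ) := by
  unfold IsLine
  refine exists_congr fun a => exists_congr fun b => and_congr_right fun _ => ?_
  have : {p : ℝ × ℝ | ∃ t : ℝ, p = a + t • (b - a)}
      = range (AffineMap.lineMap a b : ℝ →ᵃ[ℝ] ℝ × ℝ) := by
    ext p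
    simp only [mem_ofPred_eq, mem_range, AffineMap.lineMap_apply_module', eq_comm, add_comm]
  rw [this]

theorem IsLine.eq_range {L : Set (ℝ × ℝ)} (hL : IsLine L) {p q : ℝ × ℝ} (hp : p ∈ L) (hq : q ∈ L)
    (hpq : p ≠ q) : L = range (AffineMap.lineMap p q : ℝ →ᵃ[ℝ] ℝ × ℝ) := by
  obtain ⟨a, b, hab, rfl⟩ := (isLine_iff L).1 hL
  obtain ⟨s, rfl⟩ := hp
  obtain ⟨t, rfl⟩ := hq
  have hst : t - s ≠ 0 := by
    intro h
    exact hpq (by rw [sub_eq_zero.1 h])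
  ext x
  simp only [mem_range, AffineMap.lineMap_apply_module']
  constructor
  · rintro ⟨r, rfl⟩
    refine ⟨(r - s) / (t - s), ?_⟩
    ext <;> simp <;> field_simp <;> ring
  · rintro ⟨r, rfl⟩
    refine ⟨r * (t - s) + s, ?_⟩
    ext <;> simp <;> ring

theorem IsLine.eq_of_mem {L M : Set (ℝ × ℝ)} (hL : IsLine L) (hM : IsLine M) {p q : ℝ × ℝ}
    (hpq : p ≠ q) (hp : p ∈ L) (hq : q ∈ L) (hp' : p ∈ M) (hq' : q ∈ M) : L = M := by
  rw [hL.eq_range hp hq hpq, hM.eq_range hp' hq' hpq]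

/-- A nondegenerate segment covered by finitely many lines lies on one of them: some line contains
two of its infinitely many points. -/
theorem exists_line_of_covered {𝓛 : Finset (Set (ℝ × ℝ))} (h𝓛 : ∀ L ∈ 𝓛, IsLine L) {x y : ℝ × ℝ}
    (hxy : x ≠ y) (h : segment ℝ x y ⊆ ⋃ L ∈ 𝓛, L) : ∃ L ∈ 𝓛, x ∈ L ∧ y ∈ L := by
  have hinf : (segment ℝ x y).Infinite := by
    rw [segment_eq_image_lineMap]
    exact (Icc_infinite one_pos).image (AffineMap.lineMap_injective ℝ hxy).injOn
  have h' : ∀ p ∈ segment ℝ x y, ∃ L ∈ 𝓛, p ∈ L := by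
    intro p hp
    simpa using h hp
  choose! f hf hpf using h'
  obtain ⟨p, hp, q, hq, hpq, hfe⟩ :=
    hinf.exists_ne_map_eq_of_mapsTo (t := (𝓛 : Set (Set (ℝ × ℝ)))) (fun p hp => hf p hp)
      𝓛.finite_toSet
  have hM : IsLine (range (AffineMap.lineMap x y : ℝ →ᵃ[ℝ] ℝ × ℝ)) :=
    (isLine_iff _).2 ⟨x, y, hxy, rfl⟩
  have hsub : segment ℝ x y ⊆ range (AffineMap.lineMap x y : ℝ →ᵃ[ℝ] ℝ × ℝ) := by
    rw [segment_eq_image_lineMap]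
    exact image_subset_range _ _
  have hEq := (h𝓛 _ (hf p hp)).eq_of_mem hM hpq (hpf p hp) (hfe ▸ hpf q hq) (hsub hp) (hsub hq)
  refine ⟨f p, hf p hp, ?_, ?_⟩
  · rw [hEq]; exact hsub (left_mem_segment ℝ x y)
  · rw [hEq]; exact hsub (right_mem_segment ℝ x y)

/-- Distinct edges `uv` and `vw` on one line are aligned: any other order of the three points puts
a vertex on an edge not incident to it. -/
theorem aligned_of_collinear {G : SimpleGraph V} {ρ : V → ℝ × ℝ} (hρ : IsPlanarDrawing G ρ)
    {L : Set (ℝ × ℝ)} (hL : IsLine L) {u v w : V} (huv : G.Adj u v) (hvw : G.Adj v w)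
    (huw : u ≠ w) (hu : ρ u ∈ L) (hv : ρ v ∈ L) (hw : ρ w ∈ L) :
    Aligned G ρ s(u, v) s(v, w) := by
  obtain ⟨a, b, hab, rfl⟩ := (isLine_iff L).1 hL
  obtain ⟨s, hs⟩ := hu
  obtain ⟨t, ht⟩ := hv
  obtain ⟨r, hr⟩ := hw
  have h1 := hρ.vertex_not_on_edge hvw huv.ne huw
  have h2 := hρ.vertex_not_on_edge huv huw.symm hvw.ne.symm
  have hinj := AffineMap.lineMap_injective ℝ hab
  have hst : s ≠ t := fun h => huv.ne (hρ.inj (by rw [← hs, ← ht, h]))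
  have htr : t ≠ r := fun h => hvw.ne (hρ.inj (by rw [← hr, ← ht, h]))
  have hsr : s ≠ r := fun h => huw (hρ.inj (by rw [← hs, ← hr, h]))
  refine ⟨u, v, w, huw, huv, hvw, rfl, rfl, ?_⟩
  rw [← hs, ← ht, ← hr, ← image_segment, hinj.mem_set_image, segment_eq_uIcc, mem_uIcc] at h1 h2
  rw [← hs, ← ht, ← hr, ← image_openSegment, hinj.mem_set_image]
  rcases lt_or_gt_of_ne hsr with h | h
  · rw [openSegment_eq_Ioo h, mem_Ioo]
    grind
  · rw [openSegment_symm, openSegment_eq_Ioo h, mem_Ioo]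
    grind

theorem Aligned.symm {G : SimpleGraph V} {ρ : V → ℝ × ℝ} {e f : Sym2 V} (h : Aligned G ρ e f) :
    Aligned G ρ f e := by
  obtain ⟨u, v, w, huw, huv, hvw, rfl, rfl, hm⟩ := h
  exact ⟨w, v, u, huw.symm, hvw.symm, huv.symm, Sym2.eq_swap, Sym2.eq_swap,
    openSegment_symm ℝ (ρ u) (ρ w) ▸ hm⟩

theorem class_eq {G : SimpleGraph V} {ρ : V → ℝ × ℝ} {e f : Sym2 V}
    (h : Relation.ReflTransGen (Aligned G ρ) e f) :
    {g | Relation.ReflTransGen (Aligned G ρ) e g} =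
      {g | Relation.ReflTransGen (Aligned G ρ) f g} := by
  have : Std.Symm (Aligned G ρ) := ⟨fun _ _ => Aligned.symm⟩
  have h' : Relation.ReflTransGen (Aligned G ρ) f e :=
    (Relation.ReflTransGen.stdSymm (r := Aligned G ρ)).symm _ _ h
  ext g
  exact ⟨h'.trans, h.trans⟩

/-- A finite connected graph on a linear order none of whose edges jumps over a vertex is a path:
connectedness forces consecutive vertices to be adjacent. -/
theorem nonempty_iso_pathGraph {W : Type*} [Fintype W] [LinearOrder W] (H : SimpleGraph W)
    (hc : H.Connected) (hj : ∀ ⦃x y z : W⦄, H.Adj x y → x < z → z < y → False) :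
    Nonempty (H ≃g SimpleGraph.pathGraph (Fintype.card W)) := by
  have hH : H = SimpleGraph.hasse W := by
    have key : ∀ x y : W, x ⋖ y → H.Adj x y := by
      intro x y hxy
      by_contra hn
      -- No edge crosses the cut between `{z | z ≤ x}` and `{z | y ≤ z}`.
      have step : ∀ p q : W, H.Adj p q → p ≤ x → q ≤ x := by
        intro p q hpq hp
        by_contra hq
        have hyq : y ≤ q := hxy.ge_of_gt (not_le.1 hq)
        rcases hp.lt_or_eq with hp' | rfl
        · exact hj hpq hp' (not_le.1 hq)
        · rcases hyq.lt_or_eq with h | rfl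
          · exact hj hpq hxy.lt h
          · exact hn hpq
      have hw : ∀ p q : W, H.Walk p q → p ≤ x → q ≤ x := by
        intro p q w
        induction w with
        | nil => exact id
        | cons h _ ih => exact fun hp => ih (step _ _ h hp)
      obtain ⟨w⟩ := hc.preconnected x y
      exact absurd (hw x y w le_rfl) (not_le.2 hxy.lt)
    ext x y
    rw [SimpleGraph.hasse_adj]
    constructor
    · intro h
      rcases lt_or_gt_of_ne h.ne with hlt | hlt
      · exact Or.inl ⟨hlt, fun z h1 h2 => hj h h1 h2⟩
      · exact Or.inr ⟨hlt, fun z h1 h2 => hj h.symm h1 h2⟩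
    · rintro (h | h)
      · exact key x y h
      · exact (key y x h).symm
  have o : Fin (Fintype.card W) ≃o W := Fintype.orderIsoFinOfCardEq W rfl
  refine ⟨⟨o.symm.toEquiv, ?_⟩⟩
  intro x y
  rw [hH]
  simp [SimpleGraph.pathGraph, SimpleGraph.hasse_adj]

/-- If no component is a path, the segment through an edge `e` on a line `L` of the cover has a
vertex on another line `L'` of the cover. -/
theorem exists_crossing [Fintype V] {G : SimpleGraph V} {ρ : V → ℝ × ℝ}
    (hρ : IsPlanarDrawing G ρ)
    (hpath : ∀ c : G.ConnectedComponent, ∀ n : ℕ,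
      IsEmpty (G.induce c.supp ≃g SimpleGraph.pathGraph n))
    {𝓛 : Finset (Set (ℝ × ℝ))} (h𝓛 : ∀ L ∈ 𝓛, IsLine L)
    (hcov : ∀ ⦃u v : V⦄, G.Adj u v → segment ℝ (ρ u) (ρ v) ⊆ ⋃ L ∈ 𝓛, L)
    {e : Sym2 V} (he : e ∈ G.edgeSet) :
    ∃ x y : V, ∃ L ∈ 𝓛, ∃ L' ∈ 𝓛, G.Adj x y ∧ Relation.ReflTransGen (Aligned G ρ) e s(x, y) ∧
      ρ x ∈ L ∧ ρ y ∈ L ∧ ρ x ∈ L' ∧ L ≠ L' := by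
  classical
  induction e with | _ u v
  have huv : G.Adj u v := he
  obtain ⟨L, hL, huL, hvL⟩ :=
    exists_line_of_covered h𝓛 (fun h => huv.ne (hρ.inj h)) (hcov huv)
  by_contra! hno
  -- The vertices of the segment are closed under adjacency.
  let P : V → Prop := fun x => ∃ y, G.Adj x y ∧
    Relation.ReflTransGen (Aligned G ρ) s(u, v) s(x, y) ∧ ρ x ∈ L ∧ ρ y ∈ L
  have step : ∀ x z, G.Adj x z → P x → P z := by
    rintro x z hxz ⟨y, hxy, hr, hx, hy⟩
    obtain ⟨M, hM, hxM, hzM⟩ :=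
      exists_line_of_covered h𝓛 (fun h => hxz.ne (hρ.inj h)) (hcov hxz)
    obtain rfl : L = M := hno x y L hL M hM hxy hr hx hy hxM
    refine ⟨x, hxz.symm, ?_, hzM, hx⟩
    by_cases hyz : y = z
    · subst hyz
      rwa [Sym2.eq_swap (a := y)]
    · have := aligned_of_collinear hρ (h𝓛 L hL) hxy.symm hxz hyz hy hx hzM
      rw [Sym2.eq_swap (a := y)] at this
      rw [Sym2.eq_swap (a := z)]
      exact hr.tail this
  have hw : ∀ p q : V, G.Walk p q → P p → P q := by
    intro p q w
    induction w with
    | nil => exact id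
    | cons h _ ih => exact fun hp => ih (step _ _ h hp)
  have hPu : P u := ⟨v, huv, .refl, huL, hvL⟩
  let c := G.connectedComponentMk u
  have hline : ∀ x : c.supp, ρ x ∈ L := by
    rintro ⟨x, hx⟩
    obtain ⟨w⟩ := (SimpleGraph.ConnectedComponent.exact hx).symm
    obtain ⟨_, _, _, h, _⟩ := hw u x w hPu
    exact h
  obtain ⟨a, b, hab, rfl⟩ := (isLine_iff L).1 (h𝓛 L hL)
  choose t ht using hline
  have hinj := AffineMap.lineMap_injective ℝ hab
  have htinj : Function.Injective t := by
    intro x y hxy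
    exact Subtype.ext (hρ.inj (by rw [← ht x, ← ht y, hxy]))
  let _ : LinearOrder c.supp := LinearOrder.lift' t htinj
  have hlt : ∀ x y : c.supp, x < y → t x < t y := fun x y h => h
  obtain ⟨i⟩ := nonempty_iso_pathGraph (G.induce c.supp) c.connected_toSimpleGraph (by
    intro x y z hxy hxz hzy
    have hzx : (z : V) ≠ x := fun h => hxz.ne (Subtype.ext h.symm)
    have hzy' : (z : V) ≠ y := fun h => hzy.ne (Subtype.ext h)
    refine hρ.vertex_not_on_edge (show G.Adj (x : V) y from hxy) hzx hzy' ?_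
    rw [← ht x, ← ht y, ← ht z, ← image_segment, hinj.mem_set_image, segment_eq_uIcc, mem_uIcc]
    exact Or.inl ⟨(hlt _ _ hxz).le, (hlt _ _ hzy).le⟩)
  exact (hpath c _).false i

theorem numSegments_le [Fintype V] {G : SimpleGraph V} {ρ : V → ℝ × ℝ}
    (hρ : IsPlanarDrawing G ρ)
    (hpath : ∀ c : G.ConnectedComponent, ∀ n : ℕ,
      IsEmpty (G.induce c.supp ≃g SimpleGraph.pathGraph n))
    {𝓛 : Finset (Set (ℝ × ℝ))} (h𝓛 : ∀ L ∈ 𝓛, IsLine L)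
    (hcov : ∀ ⦃u v : V⦄, G.Adj u v → segment ℝ (ρ u) (ρ v) ⊆ ⋃ L ∈ 𝓛, L) :
    numSegments G ρ ≤ 𝓛.card ^ 2 := by
  have hR : ∀ S ∈ {S : Set (Sym2 V) |
      ∃ e ∈ G.edgeSet, S = {f | Relation.ReflTransGen (Aligned G ρ) e f}},
      ∃ p : Set (ℝ × ℝ) × Set (ℝ × ℝ), p ∈ 𝓛 ×ˢ 𝓛 ∧ ∃ x y : V, G.Adj x y ∧
        S = {f | Relation.ReflTransGen (Aligned G ρ) s(x, y) f} ∧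
        ρ x ∈ p.1 ∧ ρ y ∈ p.1 ∧ ρ x ∈ p.2 ∧ p.1 ≠ p.2 := by
    rintro S ⟨e, he, rfl⟩
    obtain ⟨x, y, L, hL, L', hL', hxy, hr, h⟩ := exists_crossing hρ hpath h𝓛 hcov he
    exact ⟨(L, L'), Finset.mem_product.2 ⟨hL, hL'⟩, x, y, hxy, class_eq hr, h⟩
  choose! F hF hF' using hR
  calc numSegments G ρ
      ≤ ((𝓛 ×ˢ 𝓛 : Finset _) : Set (Set (ℝ × ℝ) × Set (ℝ × ℝ))).ncard := by
        refine Set.ncard_le_ncard_of_injOn F (fun S hS => hF S hS) ?_ (Finset.finite_toSet _)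
        intro S hS T hT hST
        obtain ⟨x, y, hxy, hSe, hx1, hy1, hx2, hne⟩ := hF' S hS
        obtain ⟨x', y', hxy', hTe, hx1', hy1', hx2', -⟩ := hF' T hT
        obtain ⟨hm1, hm2⟩ := Finset.mem_product.1 (hF S hS)
        rw [← hST] at hx1' hy1' hx2'
        obtain rfl : x = x' := by
          by_contra hxx
          exact hne ((h𝓛 _ hm1).eq_of_mem (h𝓛 _ hm2) (fun h => hxx (hρ.inj h))
            hx1 hx1' hx2 hx2')
        rw [hSe, hTe]
        by_cases hyy : y = y'
        · rw [hyy]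
        · have := aligned_of_collinear hρ (h𝓛 _ hm1) hxy.symm hxy' hyy hy1 hx1 hy1'
          rw [Sym2.eq_swap (a := y)] at this
          exact class_eq (.single this)
    _ = 𝓛.card ^ 2 := by rw [Set.ncard_coe_finset, Finset.card_product, sq]

/-- if no connected component of a planar graph `G` is a path (in particular,
no component is a single vertex), then `seg(G) ≤ lin(G)²`. -/
theorem segNumber_le_sq_linNumber {V : Type*} [Fintype V] (G : SimpleGraph V)
    (hG : ∃ ρ : V → ℝ × ℝ, IsPlanarDrawing G ρ)
    (hpath : ∀ c : G.ConnectedComponent, ∀ n : ℕ,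
      IsEmpty (G.induce c.supp ≃g SimpleGraph.pathGraph n)) :
    segNumber G ≤ linNumber G ^ 2 := by
  classical
  -- The infimum defining `linNumber` is attained: the lines spanned by the edges form a cover.
  have hne : {n : ℕ | ∃ ρ : V → ℝ × ℝ, IsPlanarDrawing G ρ ∧
      ∃ 𝓛 : Finset (Set (ℝ × ℝ)), 𝓛.card = n ∧ (∀ L ∈ 𝓛, IsLine L) ∧
        ∀ ⦃u v : V⦄, G.Adj u v → segment ℝ (ρ u) (ρ v) ⊆ ⋃ L ∈ 𝓛, L}.Nonempty := by
    obtain ⟨ρ, hρ⟩ := hG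
    let 𝓛 : Finset (Set (ℝ × ℝ)) := (Finset.univ.filter fun p : V × V => G.Adj p.1 p.2).image
      fun p => range (AffineMap.lineMap (ρ p.1) (ρ p.2) : ℝ →ᵃ[ℝ] ℝ × ℝ)
    refine ⟨_, ρ, hρ, 𝓛, rfl, ?_, ?_⟩
    · intro L hL
      obtain ⟨p, hp, rfl⟩ := Finset.mem_image.1 hL
      exact (isLine_iff _).2
        ⟨_, _, fun h => (Finset.mem_filter.1 hp).2.ne (hρ.inj h), rfl⟩
    · intro u v huv x hx
      rw [segment_eq_image_lineMap] at hx
      exact mem_iUnion₂.2 ⟨_, Finset.mem_image.2 ⟨(u, v), by simpa using huv, rfl⟩,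
        image_subset_range _ _ hx⟩
  obtain ⟨ρ, hρ, 𝓛, hcard, h𝓛, hcov⟩ := Nat.sInf_mem hne
  calc segNumber G ≤ numSegments G ρ := Nat.sInf_le ⟨ρ, hρ, rfl⟩
    _ ≤ 𝓛.card ^ 2 := numSegments_le hρ hpath h𝓛 hcov
    _ = linNumber G ^ 2 := by rw [hcard, linNumber]
end

section
/- If a simple graph G admits a planar straight-line drawing, then any three pairwise distinct vertices of G have at most two common neighbors (otherwise G would contain a K_{3,3} subgraph, which admits no planar straight-line drawing). -/
/-!
The claim is that `K_{3,3}` has no straight-line drawing in which independent edges are disjoint;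
it is proved by a parity count. After a generic shear all vertices have distinct first coordinates.
Let `below p r s : ZMod 2` be `1` when the vertical upward ray from `p` meets the segment `rs`, and
let `before p q : ZMod 2` be `1` when `p` lies to the left of `q`. Comparing the heights of
two segments at the two ends of the interval over which both are defined shows
(`parity_of_disjoint`) that disjoint segments `pq`, `rs` satisfy, modulo 2,

`below p r s + below q r s + below r p q + below s p q`
`  = before p r + before p s + before q r + before q s`;

the right-hand side is `1` exactly when the abscissae of `p, q` interleave with those of `r, s`.

This identity is summed over the 18 pairs of independent edges of `K_{3,3}`. On the left each term
`below v r s` occurs twice, once for each edge at `v` that is independent of `rs`, so the total is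
`0`. On the right all terms cancel except `before b b' + before b' b = 1`, for the three pairs
`b, b'` in one colour class, each occurring three times; the total is `9 = 1`, a contradiction
(`not_all_disjoint`).
-/

open Set

variable {V : Type*}

/-- The ordinate, at abscissa `x`, of the line through `r` and `s` (which must not be vertical). -/
noncomputable def lineHeight (r s : ℝ × ℝ) (x : ℝ) : ℝ :=
  r.2 + (s.2 - r.2) / (s.1 - r.1) * (x - r.1)

lemma lineHeight_symm {r s : ℝ × ℝ} (h : r.1 ≠ s.1) (x : ℝ) :
    lineHeight r s x = lineHeight s r x := by
  have h1 : s.1 - r.1 ≠ 0 := sub_ne_zero.2 h.symm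
  have h2 : r.1 - s.1 ≠ 0 := sub_ne_zero.2 h
  unfold lineHeight
  field_simp
  ring

lemma lineHeight_left (r s : ℝ × ℝ) : lineHeight r s r.1 = r.2 := by
  simp [lineHeight]

lemma lineHeight_right {r s : ℝ × ℝ} (h : r.1 ≠ s.1) : lineHeight r s s.1 = s.2 := by
  rw [lineHeight_symm h, lineHeight_left]

lemma mem_segment_lineHeight {r s : ℝ × ℝ} (h : r.1 < s.1) {x : ℝ} (h1 : r.1 ≤ x)
    (h2 : x ≤ s.1) : (x, lineHeight r s x) ∈ segment ℝ r s := by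
  have h3 : 0 < s.1 - r.1 := sub_pos.2 h
  rw [segment_eq_image']
  refine ⟨(x - r.1) / (s.1 - r.1), ⟨div_nonneg (by linarith) h3.le, ?_⟩, ?_⟩
  · rw [div_le_one h3]; linarith
  · ext
    · simp; field_simp; ring
    · simp [lineHeight]; ring

/-- Two disjoint segments are in the same vertical order over all abscissae they share. -/
lemma lineHeight_lt_of_disjoint {p q r s : ℝ × ℝ} (hpq : p.1 < q.1) (hrs : r.1 < s.1)
    (hd : Disjoint (segment ℝ p q) (segment ℝ r s)) {x y : ℝ}
    (hx : x ∈ Icc p.1 q.1 ∩ Icc r.1 s.1) (hy : y ∈ Icc p.1 q.1 ∩ Icc r.1 s.1)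
    (h : lineHeight p q x < lineHeight r s x) : lineHeight p q y < lineHeight r s y := by
  by_contra! h'
  have hc : ContinuousOn (fun z => lineHeight p q z - lineHeight r s z) (uIcc x y) := by
    unfold lineHeight; fun_prop
  obtain ⟨z, hz, hz0⟩ := intermediate_value_uIcc hc
    (show (0 : ℝ) ∈ _ from mem_uIcc_of_le (by linarith) (by linarith))
  have hz1 : z ∈ Icc p.1 q.1 := uIcc_subset_Icc hx.1 hy.1 hz
  have hz2 : z ∈ Icc r.1 s.1 := uIcc_subset_Icc hx.2 hy.2 hz
  have e : lineHeight p q z = lineHeight r s z := sub_eq_zero.1 hz0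
  refine Set.disjoint_left.1 hd (mem_segment_lineHeight hpq hz1.1 hz1.2) ?_
  rw [e]
  exact mem_segment_lineHeight hrs hz2.1 hz2.2

lemma lineHeight_ne_of_disjoint {p q r s : ℝ × ℝ} (hpq : p.1 < q.1) (hrs : r.1 < s.1)
    (hd : Disjoint (segment ℝ p q) (segment ℝ r s)) {x : ℝ}
    (hx : x ∈ Icc p.1 q.1 ∩ Icc r.1 s.1) : lineHeight p q x ≠ lineHeight r s x := by
  intro e
  refine Set.disjoint_left.1 hd (mem_segment_lineHeight hpq hx.1.1 hx.1.2) ?_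
  rw [e]
  exact mem_segment_lineHeight hrs hx.2.1 hx.2.2

open Classical in
/-- The indicator modulo 2 that `p` lies strictly below the segment `rs`, strictly between the
abscissae of its ends. -/
noncomputable def below (p r s : ℝ × ℝ) : ZMod 2 :=
  if (r.1 < p.1 ∧ p.1 < s.1 ∨ s.1 < p.1 ∧ p.1 < r.1) ∧ p.2 < lineHeight r s p.1 then 1 else 0

open Classical in
/-- The indicator modulo 2 that `p` lies strictly to the left of `q`. -/
noncomputable def before (p q : ℝ × ℝ) : ZMod 2 := if p.1 < q.1 then 1 else 0

lemma below_symm {p r s : ℝ × ℝ} (h : r.1 ≠ s.1) : below p r s = below p s r := by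
  unfold below
  simp only [lineHeight_symm h, or_comm]

lemma before_swap {p q : ℝ × ℝ} (h : p.1 ≠ q.1) : before p q = before q p + 1 := by
  unfold before
  rcases lt_or_gt_of_ne h with h | h
  · simp [h, h.le]
  · simp only [h, h.not_gt, if_true, if_false]; rfl

/-- The parity identity when both segments are directed to the right and `p` is leftmost. -/
lemma parity_of_disjoint_aux {p q r s : ℝ × ℝ} (hpq : p.1 < q.1) (hrs : r.1 < s.1)
    (hpr : p.1 < r.1) (hqr : q.1 ≠ r.1) (hqs : q.1 ≠ s.1)
    (hd : Disjoint (segment ℝ p q) (segment ℝ r s)) :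
    below p r s + below q r s + below r p q + below s p q =
      before p r + before p s + before q r + before q s := by
  have hps := hpr.trans hrs
  rcases lt_or_gt_of_ne hqr with h1 | h1
  · have h2 := h1.trans hrs
    simp [below, before, hpr, hps, h1, h2, hpr.not_gt, hps.not_gt, h1.not_gt, h2.not_gt]
    decide
  have hr : r.1 ∈ Icc p.1 q.1 ∩ Icc r.1 s.1 := ⟨⟨hpr.le, h1.le⟩, le_rfl, hrs.le⟩
  have eR := lineHeight_left r s
  rcases lt_or_gt_of_ne hqs with h2 | h2
  · have hq : q.1 ∈ Icc p.1 q.1 ∩ Icc r.1 s.1 := ⟨⟨hpq.le, le_rfl⟩, h1.le, h2.le⟩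
    have eQ := lineHeight_right hpq.ne
    have n := lineHeight_ne_of_disjoint hpq hrs hd hr
    have f1 := lineHeight_lt_of_disjoint hpq hrs hd hq hr
    have f2 := lineHeight_lt_of_disjoint hpq hrs hd hr hq
    rw [eQ, eR] at f1 f2
    rw [eR] at n
    -- `r` is below `pq` exactly when `q` is not below `rs`
    have key : r.2 < lineHeight p q r.1 ↔ ¬ q.2 < lineHeight r s q.1 :=
      ⟨fun a b => (f1 b).not_gt a, fun a => lt_of_le_of_ne (not_lt.1 fun b => a (f2 b)) n.symm⟩
    simp only [below, before, hpr, hps, hpr.not_gt, hps.not_gt, h1, h2, h1.not_gt, h2.not_gt, key]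
    by_cases c : q.2 < lineHeight r s q.1 <;> simp [c] <;> decide
  · have hs : s.1 ∈ Icc p.1 q.1 ∩ Icc r.1 s.1 := ⟨⟨hps.le, h2.le⟩, hrs.le, le_rfl⟩
    have eS := lineHeight_right hrs.ne
    have nr := lineHeight_ne_of_disjoint hpq hrs hd hr
    have ns := lineHeight_ne_of_disjoint hpq hrs hd hs
    have f1 := lineHeight_lt_of_disjoint hpq hrs hd hs hr
    have f2 := lineHeight_lt_of_disjoint hpq hrs hd hr hs
    rw [eR] at nr
    rw [eS] at ns
    rw [eS, eR] at f1 f2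
    have key : r.2 < lineHeight p q r.1 ↔ s.2 < lineHeight p q s.1 :=
      ⟨fun a => lt_of_le_of_ne (not_lt.1 fun b => a.not_gt (f1 b)) ns.symm,
        fun a => lt_of_le_of_ne (not_lt.1 fun b => a.not_gt (f2 b)) nr.symm⟩
    simp only [below, before, hpr, hps, hpr.not_gt, hps.not_gt, h1, h2, h1.not_gt, h2.not_gt, key]
    by_cases c : s.2 < lineHeight p q s.1 <;> simp [c] <;> decide

/-- For disjoint segments whose ends have distinct abscissae, the number of ends lying
below the other segment is odd exactly when the abscissae of the two pairs of ends interleave. -/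
lemma parity_of_disjoint {p q r s : ℝ × ℝ} (hpq : p.1 ≠ q.1) (hrs : r.1 ≠ s.1)
    (hpr : p.1 ≠ r.1) (hps : p.1 ≠ s.1) (hqr : q.1 ≠ r.1) (hqs : q.1 ≠ s.1)
    (hd : Disjoint (segment ℝ p q) (segment ℝ r s)) :
    below p r s + below q r s + below r p q + below s p q =
      before p r + before p s + before q r + before q s := by
  wlog h1 : p.1 < q.1 generalizing p q
  · have := this hpq.symm hqr hqs hpr hps (by rwa [segment_symm]) (by grind)
    rw [below_symm hpq, below_symm (p := s) hpq]
    linear_combination this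
  wlog h2 : r.1 < s.1 generalizing r s
  · have := this hrs.symm hps hpr hqs hqr (by rwa [segment_symm ℝ s r]) (by grind)
    rw [below_symm hrs, below_symm (p := q) hrs]
    linear_combination this
  rcases lt_or_gt_of_ne hpr with h3 | h3
  · exact parity_of_disjoint_aux h1 h2 h3 hqr hqs hd
  · have := parity_of_disjoint_aux h2 h1 h3 hps.symm hqs.symm hd.symm
    have two : (2 : ZMod 2) = 0 := rfl
    linear_combination this + before_swap hpr.symm + before_swap hps.symm + before_swap hqr.symm +
      before_swap hqs.symm + 2 * two

/-- With distinct abscissae, some two independent edges of `K_{3,3}` meet. -/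
lemma not_all_disjoint (A B : Fin 3 → ℝ × ℝ) (hA : ∀ i k, i ≠ k → (A i).1 ≠ (A k).1)
    (hB : ∀ i k, i ≠ k → (B i).1 ≠ (B k).1) (hAB : ∀ i k, (A i).1 ≠ (B k).1)
    (hd : ∀ i k j l, i ≠ k → j ≠ l →
      Disjoint (segment ℝ (A i) (B j)) (segment ℝ (A k) (B l))) : False := by
  have key : ∀ i k j l, i ≠ k → j ≠ l → _ := fun i k j l h h' =>
    parity_of_disjoint (hAB i j) (hAB k l) (hA i k h) (hAB i l) (hAB k j).symm (hB j l h')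
      (hd i k j l h h')
  have s01 := before_swap (hB 0 1 (by decide))
  have s02 := before_swap (hB 0 2 (by decide))
  have s12 := before_swap (hB 1 2 (by decide))
  have k1 := fun j l h' => key 0 1 j l (by decide) h'
  have k2 := fun j l h' => key 0 2 j l (by decide) h'
  have k3 := fun j l h' => key 1 2 j l (by decide) h'
  have t : ∀ f : Fin 3 → Fin 3 → Prop, (∀ j l, j ≠ l → f j l) →
      f 0 1 ∧ f 0 2 ∧ f 1 0 ∧ f 1 2 ∧ f 2 0 ∧ f 2 1 := fun f h =>
    ⟨h _ _ (by decide), h _ _ (by decide), h _ _ (by decide), h _ _ (by decide),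
      h _ _ (by decide), h _ _ (by decide)⟩
  have t1 := t _ k1
  have t2 := t _ k2
  have t3 := t _ k3
  clear k1 k2 k3 key t hd hA hB hAB
  have two : (2 : ZMod 2) = 0 := rfl
  grind

/-- Some shear makes the abscissae of finitely many distinct points distinct. -/
lemma exists_shear {V : Type*} [Finite V] {ρ : V → ℝ × ℝ} (hρ : Function.Injective ρ) :
    ∃ t : ℝ, Function.Injective fun v => (ρ v).1 + t * (ρ v).2 := by
  obtain ⟨t, ht⟩ := (Set.finite_range fun w : V × V =>
    ((ρ w.1).1 - (ρ w.2).1) / ((ρ w.2).2 - (ρ w.1).2)).exists_notMem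
  refine ⟨t, fun u v huv => hρ ?_⟩
  simp only at huv
  by_cases h : (ρ v).2 - (ρ u).2 = 0
  · have h2 : (ρ u).2 = (ρ v).2 := by linarith
    rw [h2] at huv
    exact Prod.ext (by linarith) h2
  · exact (ht ⟨(u, v), by rw [div_eq_iff h]; linarith⟩).elim

/-- The shear `(x, y) ↦ (x + t y, y)` of the plane. -/
def shear (t : ℝ) : ℝ × ℝ →ₗ[ℝ] ℝ × ℝ :=
  (LinearMap.fst ℝ ℝ ℝ + t • LinearMap.snd ℝ ℝ ℝ).prod (LinearMap.snd ℝ ℝ ℝ)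

lemma shear_injective (t : ℝ) : Function.Injective (shear t) := by
  rintro ⟨a, b⟩ ⟨c, d⟩ h
  have h2 : b = d := congrArg Prod.snd h
  have h1 : a + t * b = c + t * d := congrArg Prod.fst h
  subst h2
  simpa using h1

/-- In a planar drawing, edges without a common endpoint are disjoint. -/
lemma IsPlanarDrawing.disjoint {V : Type*} {G : SimpleGraph V} {ρ : V → ℝ × ℝ}
    (h : IsPlanarDrawing G ρ) {u v x y : V} (huv : G.Adj u v) (hxy : G.Adj x y)
    (h1 : u ≠ x) (h2 : u ≠ y) (h3 : v ≠ x) (h4 : v ≠ y) :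
    Disjoint (segment ℝ (ρ u) (ρ v)) (segment ℝ (ρ x) (ρ y)) := by
  refine Set.disjoint_left.2 fun p hp hp' => ?_
  obtain ⟨w, hw, hw', -⟩ := h.edge_inter huv hxy (by simp [h1, h2]) p hp hp'
  grind

/-- if a simple graph admits a planar straight-line drawing, then any three
pairwise distinct vertices have at most two common neighbors. -/
theorem common_neighbors_le_two {V : Type*} [Fintype V] (G : SimpleGraph V)
    (hG : ∃ ρ : V → ℝ × ℝ, IsPlanarDrawing G ρ)
    (a b c : V) (hab : a ≠ b) (hac : a ≠ c) (hbc : b ≠ c) :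
    ({x : V | G.Adj a x ∧ G.Adj b x ∧ G.Adj c x}).ncard ≤ 2 := by
  obtain ⟨ρ, hρ⟩ := hG
  by_contra! hcard
  obtain ⟨x, y, z, hx, hy, hz, hxy, hxz, hyz⟩ := (Set.two_lt_ncard_iff (Set.toFinite _)).1 hcard
  obtain ⟨t, ht⟩ := exists_shear hρ.inj
  let A : Fin 3 → V := ![a, b, c]
  let B : Fin 3 → V := ![x, y, z]
  have hA : ∀ i k, i ≠ k → A i ≠ A k := by
    intro i k h
    fin_cases i <;> fin_cases k <;> simp_all [A, eq_comm]
  have hB : ∀ i k, i ≠ k → B i ≠ B k := by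
    intro i k h
    fin_cases i <;> fin_cases k <;> simp_all [B, eq_comm]
  have hAB : ∀ i k, G.Adj (A i) (B k) := by
    intro i k
    fin_cases i <;> fin_cases k <;> simp_all [A, B]
  have hne : ∀ u v, u ≠ v → (shear t (ρ u)).1 ≠ (shear t (ρ v)).1 := fun u v h e => h (ht e)
  refine not_all_disjoint (fun i => shear t (ρ (A i))) (fun i => shear t (ρ (B i)))
    (fun i k h => hne _ _ (hA i k h)) (fun i k h => hne _ _ (hB i k h))
    (fun i k => hne _ _ (hAB i k).ne) fun i k j l h h' => ?_
  have himage : ∀ p q, segment ℝ (shear t p) (shear t q) = shear t '' segment ℝ p q :=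
    fun p q => (image_segment ℝ (shear t).toAffineMap p q).symm
  rw [himage, himage]
  exact (Set.disjoint_image_iff (shear_injective t)).2
    (hρ.disjoint (hAB i j) (hAB k l) (hA i k h) (hAB i l).ne (hAB k j).ne.symm (hB j l h'))
end

section
/- Let G be a simple graph admitting a planar straight-line drawing, and let V' be a vertex cover of G with |V'| = k. Then the number of vertices in V(G) ∖ V' that have degree at least 3 in G is at most 2·∑_{j=3}^{k} C(k, j), where C(k,j) denotes the binomial coefficient. -/
/-! The neighbourhood of a vertex outside the cover is a subset of `V'`, and the number of subsets
of `V'` with at least three elements is `∑_{j=3}^{k} C(k, j)`. Three outside vertices with the same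
neighbourhood of size at least three would form a `K_{3,3}`, so each such subset is the
neighbourhood of at most two outside vertices, provided `K_{3,3}` has no straight-line drawing.

The latter is proved with orientations of triples (`k33_not_planar`). If six points `a₁, a₂, a₃`,
`b₁, b₂, b₃` have disjoint segments `[aᵢ, bⱼ]`, `[aₖ, bₗ]` for `i ≠ k`, `j ≠ l`, then these segments
are strictly separated by lines, so the points can be perturbed into general position
(`eventually_det3_ne`, `eventually_sep`). Record the orientation of a triple as an element of
`ZMod 2`, and count modulo 2 the crossings between the sides of the triangles `a₁a₂a₃` and
`b₁b₂b₃`: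

* each of the nine quadrilaterals `aᵢ bₖ aⱼ bₗ` is simple, so that one of the lines carrying its
  diagonals `aᵢaⱼ`, `bₖbₗ` separates the other two vertices (`quad_relation`); summed over the nine
  quadrilaterals this says that the number of crossings is odd;
* the three-term Grassmann–Plücker relation (`plucker_relation`) shows that this number is even,
  as it is for any two closed curves.
-/

open Set

variable {V : Type*}

namespace K33

/-! ### Orientations of triples -/

/-- Twice the signed area of the triangle `p q r`. -/
def det3 (p q r : ℝ × ℝ) : ℝ :=
  (q.1 - p.1) * (r.2 - p.2) - (q.2 - p.2) * (r.1 - p.1)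

open Classical in
/-- The orientation of the triple `p, q, r` with values in `ZMod 2`: `0` if it is counterclockwise
and `1` otherwise. Collinear triples also get the value `1`. -/
noncomputable def ori (p q r : ℝ × ℝ) : ZMod 2 := if 0 < det3 p q r then 0 else 1

lemma ori_cyclic (p q r : ℝ × ℝ) : ori q r p = ori p q r := by
  have : det3 q r p = det3 p q r := by simp only [det3]; ring
  simp only [ori, this]

lemma ori_swap {p q r : ℝ × ℝ} (h : det3 p q r ≠ 0) : ori q p r = ori p q r + 1 := by
  have h1 : det3 q p r = - det3 p q r := by simp only [det3]; ring
  unfold ori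
  rw [h1]
  rcases lt_or_gt_of_ne h with h | h
  · rw [if_pos (by linarith), if_neg (by linarith)]; decide
  · rw [if_neg (by linarith), if_pos (by linarith)]; decide

/-- Three-term Grassmann–Plücker relation, read on signs: if the two terms on the right-hand side
of `[apq][abd] = [apb][aqd] - [apd][aqb]` have opposite signs, they determine the sign of the
left-hand side. -/
lemma plucker_relation {a p q b d : ℝ × ℝ} (h1 : det3 a p q ≠ 0) (h2 : det3 a b d ≠ 0)
    (h3 : det3 a p b ≠ 0) (h4 : det3 a q d ≠ 0) (h5 : det3 a p d ≠ 0) (h6 : det3 a q b ≠ 0) :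
    (ori a b d + ori a p q + ori a p b + ori a q d) *
      (ori a p b + ori a q d + ori a p d + ori a q b) = 0 := by
  have key : det3 a p q * det3 a b d = det3 a p b * det3 a q d - det3 a p d * det3 a q b := by
    simp only [det3]; ring
  unfold ori
  generalize det3 a p q = x1 at *
  generalize det3 a b d = x2 at *
  generalize det3 a p b = x3 at *
  generalize det3 a q d = x4 at *
  generalize det3 a p d = x5 at *
  generalize det3 a q b = x6 at *
  rcases lt_or_gt_of_ne h1 with g1 | g1 <;> rcases lt_or_gt_of_ne h2 with g2 | g2 <;>
  rcases lt_or_gt_of_ne h3 with g3 | g3 <;> rcases lt_or_gt_of_ne h4 with g4 | g4 <;>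
  rcases lt_or_gt_of_ne h5 with g5 | g5 <;> rcases lt_or_gt_of_ne h6 with g6 | g6 <;>
  simp only [g1, g2, g3, g4, g5, g6, not_lt_of_gt, if_true, if_false] <;>
  first
  | decide
  | (exfalso
     have e1 := mul_pos_of_neg_of_neg (a := x1) (b := x2)
     have e2 := mul_pos (a := x1) (b := x2)
     have e3 := mul_neg_of_neg_of_pos (a := x1) (b := x2)
     have e4 := mul_neg_of_pos_of_neg (a := x1) (b := x2)
     have f1 := mul_pos_of_neg_of_neg (a := x3) (b := x4)
     have f2 := mul_pos (a := x3) (b := x4)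
     have f3 := mul_neg_of_neg_of_pos (a := x3) (b := x4)
     have f4 := mul_neg_of_pos_of_neg (a := x3) (b := x4)
     have k1 := mul_pos_of_neg_of_neg (a := x5) (b := x6)
     have k2 := mul_pos (a := x5) (b := x6)
     have k3 := mul_neg_of_neg_of_pos (a := x5) (b := x6)
     have k4 := mul_neg_of_pos_of_neg (a := x5) (b := x6)
     simp only [g1, g2, g3, g4, g5, g6, true_imp_iff] at e1 e2 e3 e4 f1 f2 f3 f4 k1 k2 k3 k4
     linarith)

/-! ### Separated segments and simple quadrilaterals -/

/-- The pairs `{a, b}` and `{c, d}` lie strictly on different sides of some line. -/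
def Sep (a b c d : ℝ × ℝ) : Prop :=
  ∃ α β u : ℝ, α * a.1 + β * a.2 < u ∧ α * b.1 + β * b.2 < u ∧
    u < α * c.1 + β * c.2 ∧ u < α * d.1 + β * d.2

/-- Separated segments do not cross: the line through one pair does not separate the other pair,
or vice versa. -/
lemma Sep.no_cross {a b c d : ℝ × ℝ} (h : Sep a b c d)
    (h1 : det3 a b c * det3 a b d < 0) (h2 : det3 c d a * det3 c d b < 0) : False := by
  obtain ⟨α, β, u, ha, hb, hc, hd⟩ := h
  -- The lines `ab` and `cd` meet in a point whose affine coordinates on each line are ratios of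
  -- determinants. `e0` equates the two denominators up to sign, and `key` evaluates the separating
  -- functional at this point in both ways.
  have e0 : det3 c d b - det3 c d a = -(det3 a b d - det3 a b c) := by simp only [det3]; ring
  have key : (α * a.1 + β * a.2 - u) * det3 c d b - (α * b.1 + β * b.2 - u) * det3 c d a =
      -((α * c.1 + β * c.2 - u) * det3 a b d - (α * d.1 + β * d.2 - u) * det3 a b c) := by
    simp only [det3]; ring
  rcases mul_neg_iff.1 h1 with ⟨p1, p2⟩ | ⟨p1, p2⟩ <;>
  rcases mul_neg_iff.1 h2 with ⟨q1, q2⟩ | ⟨q1, q2⟩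
  · nlinarith
  · nlinarith
  · nlinarith
  · nlinarith

/-- If the quadrilateral `a b c d` is simple, then `b, d` are on different sides of the line `ac`
or `a, c` are on different sides of the line `bd`. -/
lemma quad_relation {a b c d : ℝ × ℝ} (h1 : det3 a c b ≠ 0) (h2 : det3 a c d ≠ 0)
    (h3 : det3 a b d ≠ 0) (h4 : det3 c b d ≠ 0) (s1 : Sep a b c d) (s2 : Sep a d c b) :
    (1 + ori a c b + ori a c d) * (1 + ori a b d + ori c b d) = 0 := by
  have n1 := s1.no_cross
  have n2 := s2.no_cross
  rw [show det3 a b c = - det3 a c b by simp only [det3]; ring,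
    show det3 c d a = det3 a c d by simp only [det3]; ring,
    show det3 c d b = - det3 c b d by simp only [det3]; ring] at n1
  rw [show det3 a d c = - det3 a c d by simp only [det3]; ring,
    show det3 a d b = - det3 a b d by simp only [det3]; ring,
    show det3 c b a = det3 a c b by simp only [det3]; ring] at n2
  unfold ori
  generalize det3 a c b = u at *
  generalize det3 a c d = v at *
  generalize det3 a b d = w at *
  generalize det3 c b d = t at *
  rcases lt_or_gt_of_ne h1 with g1 | g1 <;> rcases lt_or_gt_of_ne h2 with g2 | g2 <;>
  rcases lt_or_gt_of_ne h3 with g3 | g3 <;> rcases lt_or_gt_of_ne h4 with g4 | g4 <;>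
  simp only [g1, g2, g3, g4, not_lt_of_gt, if_true, if_false] <;>
  first
  | decide
  | (exfalso; exact n1 (by nlinarith) (by nlinarith))
  | (exfalso; exact n2 (by nlinarith) (by nlinarith))

/-! ### Nonplanarity of `K_{3,3}` -/

/-- `K_{3,3}` has no straight-line drawing with vertices in general position. -/
lemma k33_general {a₁ a₂ a₃ b₁ b₂ b₃ : ℝ × ℝ}
    (ha : det3 a₁ a₂ a₃ ≠ 0)
    (hu : ∀ b ∈ [b₁, b₂, b₃], det3 a₁ a₂ b ≠ 0 ∧ det3 a₁ a₃ b ≠ 0 ∧ det3 a₂ a₃ b ≠ 0)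
    (hw : ∀ a ∈ [a₁, a₂, a₃], det3 a b₁ b₂ ≠ 0 ∧ det3 a b₁ b₃ ≠ 0 ∧ det3 a b₂ b₃ ≠ 0)
    (hs : ∀ p ∈ [(a₁, a₂), (a₁, a₃), (a₂, a₃)], ∀ q ∈ [(b₁, b₂), (b₁, b₃), (b₂, b₃)],
      Sep p.1 q.1 p.2 q.2 ∧ Sep p.1 q.2 p.2 q.1) : False := by
  simp only [List.mem_cons, List.not_mem_nil, or_false, forall_eq_or_imp, forall_eq] at hu hw hs
  obtain ⟨⟨u1, u2, u3⟩, ⟨u4, u5, u6⟩, u7, u8, u9⟩ := hu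
  obtain ⟨⟨w1, w2, w3⟩, ⟨w4, w5, w6⟩, w7, w8, w9⟩ := hw
  obtain ⟨⟨s1, s2, s3⟩, ⟨s4, s5, s6⟩, s7, s8, s9⟩ := hs
  have q1 := quad_relation u1 u4 w1 w4 s1.1 s1.2
  have q2 := quad_relation u1 u7 w2 w5 s2.1 s2.2
  have q3 := quad_relation u4 u7 w3 w6 s3.1 s3.2
  have q4 := quad_relation u2 u5 w1 w7 s4.1 s4.2
  have q5 := quad_relation u2 u8 w2 w8 s5.1 s5.2
  have q6 := quad_relation u5 u8 w3 w9 s6.1 s6.2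
  have q7 := quad_relation u3 u6 w4 w7 s7.1 s7.2
  have q8 := quad_relation u3 u9 w5 w8 s8.1 s8.2
  have q9 := quad_relation u6 u9 w6 w9 s9.1 s9.2
  have flip : ∀ {p q r : ℝ × ℝ}, det3 p q r ≠ 0 → det3 q p r ≠ 0 := by
    intro p q r h
    rw [show det3 q p r = - det3 p q r by simp only [det3]; ring]
    exact neg_ne_zero.2 h
  have ha3 : det3 a₃ a₁ a₂ ≠ 0 := by
    rwa [show det3 a₃ a₁ a₂ = det3 a₁ a₂ a₃ by simp only [det3]; ring]
  have g1 := plucker_relation ha w1 u1 u5 u4 u2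
  have g2 := plucker_relation ha w2 u1 u8 u7 u2
  have g3 := plucker_relation ha w3 u4 u8 u7 u5
  have g4 := plucker_relation (flip ha) w4 (flip u1) u6 (flip u4) u3
  have g5 := plucker_relation (flip ha) w5 (flip u1) u9 (flip u7) u3
  have g6 := plucker_relation (flip ha) w6 (flip u4) u9 (flip u7) u6
  have g7 := plucker_relation ha3 w7 (flip u2) (flip u6) (flip u5) (flip u3)
  have g8 := plucker_relation ha3 w8 (flip u2) (flip u9) (flip u8) (flip u3)
  have g9 := plucker_relation ha3 w9 (flip u5) (flip u9) (flip u8) (flip u6)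
  rw [← ori_cyclic a₃ a₁ a₂] at g7 g8 g9
  rw [ori_swap ha, ori_swap u1, ori_swap u4] at g4
  rw [ori_swap ha, ori_swap u1, ori_swap u7] at g5
  rw [ori_swap ha, ori_swap u4, ori_swap u7] at g6
  rw [ori_swap u2, ori_swap u3, ori_swap u5, ori_swap u6] at g7
  rw [ori_swap u2, ori_swap u3, ori_swap u8, ori_swap u9] at g8
  rw [ori_swap u5, ori_swap u6, ori_swap u8, ori_swap u9] at g9
  -- Each `q` computes one crossing number, so their sum makes the total odd. In the sum of the `g`
  -- everything except the total number of crossings cancels in pairs.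
  have : (1 : ZMod 2) = 0 := by
    linear_combination (norm := (ring_nf; reduce_mod_char)) q1 + q2 + q3 + q4 + q5 + q6 + q7 + q8
      + q9 + g1 + g2 + g3 + g4 + g5 + g6 + g7 + g8 + g9
  exact absurd this (by decide)

lemma sep_of_disjoint {a b c d : ℝ × ℝ} (h : Disjoint (segment ℝ a b) (segment ℝ c d)) :
    Sep a b c d := by
  have hc : ∀ x y : ℝ × ℝ, IsCompact (segment ℝ x y) := fun x y => by
    rw [segment_eq_image_lineMap]
    exact isCompact_Icc.image AffineMap.lineMap_continuous
  obtain ⟨f, u, v, h1, h2, h3⟩ := geometric_hahn_banach_compact_closed (convex_segment a b)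
    (hc a b) (convex_segment c d) (hc c d).isClosed h
  have hf : ∀ p : ℝ × ℝ, f p = f (1, 0) * p.1 + f (0, 1) * p.2 := by
    intro p
    have : p = p.1 • ((1 : ℝ), (0 : ℝ)) + p.2 • ((0 : ℝ), (1 : ℝ)) := by
      ext <;> simp
    conv_lhs => rw [this]
    simp only [map_add, map_smul, smul_eq_mul]
    ring
  refine ⟨f (1, 0), f (0, 1), u, ?_, ?_, ?_, ?_⟩
  · rw [← hf]; exact h1 _ (left_mem_segment ℝ a b)
  · rw [← hf]; exact h1 _ (right_mem_segment ℝ a b)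
  · rw [← hf]; exact h2.trans (h3 _ (left_mem_segment ℝ c d))
  · rw [← hf]; exact h2.trans (h3 _ (right_mem_segment ℝ c d))

/-- The point `p` moved by `ε` in the direction of the point of the parabola with abscissa `t`. -/
def pert (ε : ℝ) (p : ℝ × ℝ) (t : ℝ) : ℝ × ℝ := (p.1 + ε * t, p.2 + ε * t ^ 2)

open Filter Topology

lemma eventually_sep {a b c d : ℝ × ℝ} (h : Sep a b c d) (r s t w : ℝ) :
    ∀ᶠ ε in 𝓝[≠] (0 : ℝ), Sep (pert ε a r) (pert ε b s) (pert ε c t) (pert ε d w) := by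
  obtain ⟨α, β, u, ha, hb, hc, hd⟩ := h
  have cont : ∀ (p : ℝ × ℝ) (t : ℝ), Tendsto
      (fun ε : ℝ => α * (pert ε p t).1 + β * (pert ε p t).2) (𝓝[≠] 0) (𝓝 (α * p.1 + β * p.2)) := by
    intro p t
    have : Continuous (fun ε : ℝ => α * (pert ε p t).1 + β * (pert ε p t).2) := by
      simp only [pert]; fun_prop
    have h0 := (this.tendsto 0).mono_left (nhdsWithin_le_nhds (s := {0}ᶜ))
    simpa [pert] using h0
  filter_upwards [(cont a r).eventually_lt_const ha, (cont b s).eventually_lt_const hb,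
    (cont c t).eventually_const_lt hc, (cont d w).eventually_const_lt hd] with ε h1 h2 h3 h4
  exact ⟨α, β, u, h1, h2, h3, h4⟩

/-- The determinant of a perturbed triple is a polynomial in `ε` whose quadratic coefficient is
the determinant of three distinct points of a parabola, so it has finitely many zeros. -/
lemma eventually_det3_ne {r s t : ℝ} (hrs : r ≠ s) (hrt : r ≠ t) (hst : s ≠ t) (a b c : ℝ × ℝ) :
    ∀ᶠ ε in 𝓝[≠] (0 : ℝ), det3 (pert ε a r) (pert ε b s) (pert ε c t) ≠ 0 := by
  set A : ℝ := (s - r) * (t - r) * (t - s) with hA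
  have hA0 : A ≠ 0 := by
    rw [hA]
    exact mul_ne_zero (mul_ne_zero (sub_ne_zero.2 hrs.symm) (sub_ne_zero.2 hrt.symm))
      (sub_ne_zero.2 hst.symm)
  set B : ℝ := (b.1 - a.1) * (t ^ 2 - r ^ 2) + (s - r) * (c.2 - a.2)
    - (b.2 - a.2) * (t - r) - (s ^ 2 - r ^ 2) * (c.1 - a.1) with hB
  have hdet : ∀ ε, det3 (pert ε a r) (pert ε b s) (pert ε c t)
      = A * ε ^ 2 + B * ε + det3 a b c := by
    intro ε; simp only [det3, pert, hA, hB]; ring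
  let P : Polynomial ℝ := Polynomial.C A * Polynomial.X ^ 2 + Polynomial.C B * Polynomial.X
    + Polynomial.C (det3 a b c)
  have hP : P ≠ 0 := by
    intro h
    have := Polynomial.natDegree_quadratic (b := B) (c := det3 a b c) hA0
    simp only [P] at h
    rw [h] at this
    simp at this
  have hfin : {x | P.IsRoot x}.Finite := Polynomial.finite_setOfPred_isRoot hP
  have hev : ∀ᶠ ε in 𝓝[≠] (0 : ℝ), ε ∉ {x | P.IsRoot x} := by
    have := (hfin.subset (sdiff_subset (t := {0}))).isClosed.isOpen_compl.mem_nhds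
      (x := 0) (by simp)
    rw [eventually_nhdsWithin_iff]
    filter_upwards [this] with ε h1 h2 h3
    exact h1 ⟨h3, h2⟩
  filter_upwards [hev] with ε h
  rw [hdet]
  intro h'
  apply h
  simp only [Polynomial.IsRoot.def, P]
  simpa using h'

/-- `K_{3,3}` has no straight-line drawing: two of the nine segments with no common endpoint
meet. -/
lemma k33_not_planar {a₁ a₂ a₃ b₁ b₂ b₃ : ℝ × ℝ}
    (hs : ∀ p ∈ [(a₁, a₂), (a₁, a₃), (a₂, a₃)], ∀ q ∈ [(b₁, b₂), (b₁, b₃), (b₂, b₃)],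
      Disjoint (segment ℝ p.1 q.1) (segment ℝ p.2 q.2) ∧
      Disjoint (segment ℝ p.1 q.2) (segment ℝ p.2 q.1)) : False := by
  have key : ∀ᶠ ε in 𝓝[≠] (0 : ℝ), False := by
    simp only [List.mem_cons, List.not_mem_nil, or_false, forall_eq_or_imp, forall_eq] at hs
    have n : ∀ {r s t : ℝ}, r < s → s < t → ∀ a b c : ℝ × ℝ,
        ∀ᶠ ε in 𝓝[≠] (0 : ℝ), det3 (pert ε a r) (pert ε b s) (pert ε c t) ≠ 0 :=
      fun h1 h2 => eventually_det3_ne h1.ne (h1.trans h2).ne h2.ne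
    have S : ∀ {a b c d : ℝ × ℝ} (r s t w : ℝ),
        Disjoint (segment ℝ a b) (segment ℝ c d) ∧ Disjoint (segment ℝ a d) (segment ℝ c b) →
        ∀ᶠ ε in 𝓝[≠] (0 : ℝ), Sep (pert ε a r) (pert ε b s) (pert ε c t) (pert ε d w) ∧
          Sep (pert ε a r) (pert ε d w) (pert ε c t) (pert ε b s) := fun r s t w h =>
      (eventually_sep (sep_of_disjoint h.1) _ _ _ _).and
        (eventually_sep (sep_of_disjoint h.2) _ _ _ _)
    have l12 : (1 : ℝ) < 2 := by norm_num
    have l13 : (1 : ℝ) < 3 := by norm_num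
    have l23 : (2 : ℝ) < 3 := by norm_num
    have l14 : (1 : ℝ) < 4 := by norm_num
    have l24 : (2 : ℝ) < 4 := by norm_num
    have l34 : (3 : ℝ) < 4 := by norm_num
    have l15 : (1 : ℝ) < 5 := by norm_num
    have l25 : (2 : ℝ) < 5 := by norm_num
    have l35 : (3 : ℝ) < 5 := by norm_num
    have l45 : (4 : ℝ) < 5 := by norm_num
    have l26 : (2 : ℝ) < 6 := by norm_num
    have l36 : (3 : ℝ) < 6 := by norm_num
    have l46 : (4 : ℝ) < 6 := by norm_num
    have l56 : (5 : ℝ) < 6 := by norm_num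
    obtain ⟨⟨s1, s2, s3⟩, ⟨s4, s5, s6⟩, s7, s8, s9⟩ := hs
    filter_upwards [n l12 l23 a₁ a₂ a₃,
      n l12 l24 a₁ a₂ b₁, n l13 l34 a₁ a₃ b₁, n l23 l34 a₂ a₃ b₁,
      n l12 l25 a₁ a₂ b₂, n l13 l35 a₁ a₃ b₂, n l23 l35 a₂ a₃ b₂,
      n l12 l26 a₁ a₂ b₃, n l13 l36 a₁ a₃ b₃, n l23 l36 a₂ a₃ b₃,
      n l14 l45 a₁ b₁ b₂, n l14 l46 a₁ b₁ b₃, n l15 l56 a₁ b₂ b₃,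
      n l24 l45 a₂ b₁ b₂, n l24 l46 a₂ b₁ b₃, n l25 l56 a₂ b₂ b₃,
      n l34 l45 a₃ b₁ b₂, n l34 l46 a₃ b₁ b₃, n l35 l56 a₃ b₂ b₃,
      S 1 4 2 5 s1, S 1 4 2 6 s2, S 1 5 2 6 s3, S 1 4 3 5 s4, S 1 4 3 6 s5, S 1 5 3 6 s6,
      S 2 4 3 5 s7, S 2 4 3 6 s8, S 2 5 3 6 s9]
      with ε ha u1 u2 u3 u4 u5 u6 u7 u8 u9 w1 w2 w3 w4 w5 w6 w7 w8 w9 s1 s2 s3 s4 s5 s6 s7 s8 s9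
    refine k33_general ha (b₁ := pert ε b₁ 4) (b₂ := pert ε b₂ 5) (b₃ := pert ε b₃ 6) ?_ ?_ ?_
    · simp only [List.mem_cons, List.not_mem_nil, or_false, forall_eq_or_imp, forall_eq]
      exact ⟨⟨u1, u2, u3⟩, ⟨u4, u5, u6⟩, u7, u8, u9⟩
    · simp only [List.mem_cons, List.not_mem_nil, or_false, forall_eq_or_imp, forall_eq]
      exact ⟨⟨w1, w2, w3⟩, ⟨w4, w5, w6⟩, w7, w8, w9⟩
    · simp only [List.mem_cons, List.not_mem_nil, or_false, forall_eq_or_imp, forall_eq]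
      exact ⟨⟨s1, s2, s3⟩, ⟨s4, s5, s6⟩, s7, s8, s9⟩
  exact key.exists.choose_spec

/-! ### Counting neighbourhoods -/

lemma disjoint_edges {V : Type*} {G : SimpleGraph V} {ρ : V → ℝ × ℝ} (h : IsPlanarDrawing G ρ)
    {a b c d : V} (hab : G.Adj a b) (hcd : G.Adj c d) (h1 : a ≠ c) (h2 : a ≠ d) (h3 : b ≠ c)
    (h4 : b ≠ d) : Disjoint (segment ℝ (ρ a) (ρ b)) (segment ℝ (ρ c) (ρ d)) := by
  rw [Set.disjoint_left]
  intro p hp hq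
  obtain ⟨w, hw1, hw2, -⟩ := h.edge_inter hab hcd (by simp [h1, h2]) p hp hq
  rcases hw1 with rfl | rfl <;> rcases hw2 with rfl | rfl <;> contradiction

lemma no_k33 {V : Type*} {G : SimpleGraph V} {ρ : V → ℝ × ℝ} (h : IsPlanarDrawing G ρ)
    {a b : Fin 3 → V} (ha : Function.Injective a) (hb : Function.Injective b)
    (hab : ∀ i j, G.Adj (a i) (b j)) : False := by
  have D : ∀ i j k l : Fin 3, i ≠ k → j ≠ l →
      Disjoint (segment ℝ (ρ (a i)) (ρ (b j))) (segment ℝ (ρ (a k)) (ρ (b l))) :=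
    fun i j k l hik hjl => disjoint_edges h (hab i j) (hab k l) (ha.ne hik) (hab i l).ne
      (hab k j).ne' (hb.ne hjl)
  have D2 : ∀ i j k l : Fin 3, i ≠ k → j ≠ l →
      Disjoint (segment ℝ (ρ (a i)) (ρ (b j))) (segment ℝ (ρ (a k)) (ρ (b l))) ∧
      Disjoint (segment ℝ (ρ (a i)) (ρ (b l))) (segment ℝ (ρ (a k)) (ρ (b j))) :=
    fun i j k l hik hjl => ⟨D i j k l hik hjl, D i l k j hik hjl.symm⟩
  refine k33_not_planar (a₁ := ρ (a 0)) (a₂ := ρ (a 1)) (a₃ := ρ (a 2))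
    (b₁ := ρ (b 0)) (b₂ := ρ (b 1)) (b₃ := ρ (b 2)) ?_
  simp only [List.mem_cons, List.not_mem_nil, or_false, forall_eq_or_imp, forall_eq]
  refine ⟨⟨?_, ?_, ?_⟩, ⟨?_, ?_, ?_⟩, ?_, ?_, ?_⟩ <;> exact D2 _ _ _ _ (by decide) (by decide)

lemma card_large_subsets {V : Type*} (s : Finset V) :
    (s.powerset.filter (fun t => 3 ≤ t.card)).card =
      ∑ j ∈ Finset.Icc 3 s.card, s.card.choose j := by
  rw [Finset.card_eq_sum_card_fiberwise (f := Finset.card) (t := Finset.Icc 3 s.card)]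
  · refine Finset.sum_congr rfl fun j hj => ?_
    rw [← Finset.card_powersetCard]
    congr 1
    ext t
    simp only [Finset.mem_Icc] at hj
    simp only [Finset.mem_filter, Finset.mem_powerset, Finset.mem_powersetCard]
    constructor
    · rintro ⟨⟨h1, -⟩, h2⟩; exact ⟨h1, h2⟩
    · rintro ⟨h1, h2⟩; exact ⟨⟨h1, by omega⟩, h2⟩
  · intro t ht
    simp only [Finset.coe_filter, Finset.mem_powerset, mem_ofPred_eq] at ht
    simpa using ⟨ht.2, Finset.card_le_card ht.1⟩

lemma injective_vec3 {V : Type*} {x y z : V} (h1 : x ≠ y) (h2 : x ≠ z) (h3 : y ≠ z) :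
    Function.Injective ![x, y, z] := by
  intro i j
  fin_cases i <;> fin_cases j <;> simp [h1, h2, h3, h1.symm, h2.symm, h3.symm]

end K33

/-- if `V'` is a vertex cover of size `k` of a graph admitting a planar
straight-line drawing, then the number of vertices outside `V'` of degree at least `3`
is at most `2 · ∑_{j=3}^{k} C(k, j)`. -/
theorem high_degree_outside_cover_bound {V : Type*} [Fintype V] (G : SimpleGraph V)
    (hG : ∃ ρ : V → ℝ × ℝ, IsPlanarDrawing G ρ)
    (V' : Finset V) (hvc : ∀ ⦃u v : V⦄, G.Adj u v → u ∈ V' ∨ v ∈ V')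
    (k : ℕ) (hk : V'.card = k) :
    ({v : V | v ∉ V' ∧ 3 ≤ (G.neighborSet v).ncard}).ncard ≤
      2 * ∑ j ∈ Finset.Icc 3 k, k.choose j := by
  classical
  obtain ⟨ρ, hρ⟩ := hG
  have hN : ∀ v, (G.neighborSet v).ncard = (G.neighborFinset v).card := fun v => by
    rw [← Set.ncard_coe_finset, SimpleGraph.coe_neighborFinset]
  rw [show {v : V | v ∉ V' ∧ 3 ≤ (G.neighborSet v).ncard} =
    ((Finset.univ.filter fun v => v ∉ V' ∧ 3 ≤ (G.neighborFinset v).card : Finset V) : Set V) by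
      ext v; simp only [hN, Finset.coe_filter, Finset.mem_univ, true_and],
    Set.ncard_coe_finset, ← hk, ← K33.card_large_subsets]
  refine Finset.card_le_mul_card_image_of_maps_to (f := fun v => G.neighborFinset v) ?_ 2 ?_
  · intro v hv
    simp only [Finset.mem_filter, Finset.mem_univ, true_and, Finset.mem_powerset] at hv ⊢
    refine ⟨fun w hw => ?_, hv.2⟩
    exact (hvc ((G.mem_neighborFinset v w).1 hw)).resolve_left hv.1
  · intro t ht
    by_contra! hcard
    obtain ⟨x, y, z, hx, hy, hz, hxy, hxz, hyz⟩ := Finset.two_lt_card_iff.1 hcard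
    simp only [Finset.mem_filter] at hx hy hz ht
    obtain ⟨p, q, r, hp, hq, hr, hpq, hpr, hqr⟩ :=
      Finset.two_lt_card_iff.1 (Nat.lt_of_succ_le ht.2)
    have adj : ∀ {v w}, G.neighborFinset v = t → w ∈ t → G.Adj v w := fun hv hw =>
      (G.mem_neighborFinset _ _).1 (hv ▸ hw)
    refine K33.no_k33 hρ (K33.injective_vec3 hxy hxz hyz) (K33.injective_vec3 hpq hpr hqr) ?_
    intro i j
    fin_cases i <;> fin_cases j <;>
      first
      | exact adj hx.2 hp | exact adj hx.2 hq | exact adj hx.2 hr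
      | exact adj hy.2 hp | exact adj hy.2 hq | exact adj hy.2 hr
      | exact adj hz.2 hp | exact adj hz.2 hq | exact adj hz.2 hr
end

section
/- Let G be a simple graph admitting a planar straight-line drawing, and let V' be a vertex cover of G with |V'| = k ≥ 3. Then the number of 2-element subsets {v,w} of V' for which some vertex of V(G) ∖ V' has neighborhood exactly {v,w} is at most 3k − 6. -/
/-!
The pairs are the edges of a simple graph `H` on `V'`, whose subdivision `S` (one midpoint per pair)
is a subgraph of `G` and so has a straight-line drawing. If `H` has `m ≥ 1` edges and every vertex
has degree at least 2, then `m ≤ 3k - 6`; a vertex on at most one pair can be deleted, and the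
induction bottoms out at `k = 3`, where there are only three pairs.

For the main case, Euler's inequality is replaced by linear algebra, with no faces and no Jordan
curve theorem. After a shear all vertices have distinct abscissas. Given a circulation `z` on the
edges of `S`, the winding potential of a point is the total flow crossing the vertical ray below it.
Its value on the side of an edge is the same at both ends of the edge (`cw_r_eq_ccw_l`: sum the
conservation law over the vertices lying below the edge), it does not change in the sector between
two cyclically consecutive edges at a vertex (`exists_next`), and it jumps by `z e` across `e`
(`cw_sub_ccw`). Hence circulations together with the constants embed into the functions on darts
that are constant along the face walk `ψ`. Restricting to the `2m` darts leaving a vertex of `H`,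
simplicity and minimum degree 2 make `e`, `ψ e`, `ψ (ψ e)` distinct, so that space has dimension at
most `2m / 3` (`finrank_invariant`). By rank-nullity, circulations have dimension at least
`2m - (k + m) + 1` (`finrank_circ`). Therefore `m - k + 2 ≤ 2m / 3`, that is, `m ≤ 3k - 6`.
-/


open Set

variable {V : Type*}

/-! ### Drawings with distinct abscissas -/

/-- An affine function `t ↦ a + b * t` without zeros in `(p, q)` has constant sign there; that sign,
here read off at the midpoint, is determined by the value at either end of the interval, or by the
slope if the value vanishes. -/
lemma affine_signs (a b p q : ℝ) (hpq : p < q)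
    (h0 : ∀ t, p < t → t < q → a + b * t ≠ 0) :
    (a + b * p ≠ 0 → (0 < a + b * p ↔ 0 < a + b * ((p + q) / 2))) ∧
    (a + b * p = 0 → (0 ≤ b ↔ 0 < a + b * ((p + q) / 2))) ∧
    (a + b * q ≠ 0 → (0 < a + b * q ↔ 0 < a + b * ((p + q) / 2))) ∧
    (a + b * q = 0 → (b ≤ 0 ↔ 0 < a + b * ((p + q) / 2))) := by
  have hm := h0 ((p + q) / 2) (by linarith) (by linarith)
  have key : ∀ s t, p ≤ s → s ≤ q → p ≤ t → t ≤ q → a + b * s < 0 → 0 < a + b * t → False := by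
    intro s t hs hs' ht ht' h1 h2
    have hb : b ≠ 0 := by rintro rfl; linarith
    rcases lt_or_gt_of_ne hb with hb | hb
    · refine h0 (-a / b) ?_ ?_ (by field_simp; ring)
      · rw [lt_div_iff_of_neg hb]; nlinarith
      · rw [div_lt_iff_of_neg hb]; nlinarith
    · refine h0 (-a / b) ?_ ?_ (by field_simp; ring)
      · rw [lt_div_iff₀ hb]; nlinarith
      · rw [div_lt_iff₀ hb]; nlinarith
  have aux : ∀ s, p ≤ s → s ≤ q → a + b * s ≠ 0 →
      (0 < a + b * s ↔ 0 < a + b * ((p + q) / 2)) := by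
    intro s h1 h2 h3
    constructor
    · intro h
      by_contra h'
      exact key _ s (by linarith) (by linarith) h1 h2 (lt_of_le_of_ne (not_lt.1 h') hm) h
    · intro h
      by_contra h'
      exact key s _ h1 h2 (by linarith) (by linarith) (lt_of_le_of_ne (not_lt.1 h') h3) h
  refine ⟨aux p le_rfl hpq.le, fun h => ?_, aux q hpq.le le_rfl, fun h => ?_⟩
  · have e : a + b * ((p + q) / 2) = b * ((q - p) / 2) := by linear_combination h
    rw [e] at hm ⊢
    have : 0 < (q - p) / 2 := by linarith
    have hb : b ≠ 0 := left_ne_zero_of_mul hm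
    rw [mul_pos_iff_of_pos_right this]
    exact ⟨fun h => lt_of_le_of_ne h hb.symm, le_of_lt⟩
  · have e : a + b * ((p + q) / 2) = -b * ((q - p) / 2) := by linear_combination h
    rw [e] at hm ⊢
    have : 0 < (q - p) / 2 := by linarith
    have hb : -b ≠ 0 := left_ne_zero_of_mul hm
    rw [mul_pos_iff_of_pos_right this]
    constructor
    · intro h; exact lt_of_le_of_ne (by linarith) hb.symm
    · intro h; linarith

/-- The ordinate at abscissa `t` of the line through the points with labels `a` and `b`. -/
noncomputable def interp {T : Type*} (px py : T → ℝ) (a b : T) (t : ℝ) : ℝ :=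
  py a + (py b - py a) / (px b - px a) * (t - px a)

/-- A straight-line drawing, without crossings, of a graph with vertex type `T` and edge type `ι`, in
which distinct vertices have distinct abscissas. The edge `e` has left end `l e` and right end `r e`.
Disjointness is only required above the open intervals spanned by the edges. -/
structure SweepDrawing (T ι : Type*) where
  px : T → ℝ
  py : T → ℝ
  l : ι → T
  r : ι → T
  px_inj : Function.Injective px
  lr : ∀ e, px (l e) < px (r e)
  no_cross : ∀ e e' t, e ≠ e' → px (l e) < t → t < px (r e) → px (l e') < t → t < px (r e') →
    interp px py (l e) (r e) t ≠ interp px py (l e') (r e') t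
  not_on : ∀ e v, px (l e) < px v → px v < px (r e) →
    interp px py (l e) (r e) (px v) ≠ py v

namespace SweepDrawing

variable {T ι : Type*} (D : SweepDrawing T ι)

/-- The slope of the line carrying an edge. -/
noncomputable def slope (e : ι) : ℝ :=
  (D.py (D.r e) - D.py (D.l e)) / (D.px (D.r e) - D.px (D.l e))

/-- The ordinate at abscissa `t` of the line carrying the edge `e`. -/
noncomputable def Y (e : ι) (t : ℝ) : ℝ := interp D.px D.py (D.l e) (D.r e) t

lemma Y_eq (e : ι) (t : ℝ) : D.Y e t = D.py (D.l e) + D.slope e * (t - D.px (D.l e)) := rfl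

lemma Y_l (e : ι) : D.Y e (D.px (D.l e)) = D.py (D.l e) := by simp [Y_eq]

lemma Y_r (e : ι) : D.Y e (D.px (D.r e)) = D.py (D.r e) := by
  have := D.lr e
  have : D.px (D.r e) - D.px (D.l e) ≠ 0 := by linarith
  rw [Y_eq, slope]; field_simp; ring

/-- If the abscissa ranges of `e` and `e'` overlap, then one of the two edges lies below the other.
The proposition `δ` says that `e'` is the lower one; it can be read off at the left end of the
overlap, according to which edge starts there, and likewise at the right end. -/
lemma overlap {e e' : ι} (hne : e ≠ e') (h1 : D.px (D.l e') < D.px (D.r e))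
    (h2 : D.px (D.l e) < D.px (D.r e')) :
    ∃ δ : Prop,
      (D.px (D.l e') < D.px (D.l e) → (D.Y e' (D.px (D.l e)) < D.py (D.l e) ↔ δ)) ∧
      (D.l e' = D.l e → (D.slope e' ≤ D.slope e ↔ δ)) ∧
      (D.px (D.l e) < D.px (D.l e') → (D.py (D.l e') < D.Y e (D.px (D.l e')) ↔ δ)) ∧
      (D.px (D.r e) < D.px (D.r e') → (D.Y e' (D.px (D.r e)) < D.py (D.r e) ↔ δ)) ∧
      (D.r e' = D.r e → (D.slope e ≤ D.slope e' ↔ δ)) ∧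
      (D.px (D.r e') < D.px (D.r e) → (D.py (D.r e') < D.Y e (D.px (D.r e')) ↔ δ)) := by
  have hl := D.lr e
  have hl' := D.lr e'
  set p := max (D.px (D.l e)) (D.px (D.l e')) with hp
  set q := min (D.px (D.r e)) (D.px (D.r e')) with hq
  obtain ⟨a, ha⟩ : ∃ a, a = D.Y e 0 - D.Y e' 0 := ⟨_, rfl⟩
  obtain ⟨b, hb⟩ : ∃ b, b = D.slope e - D.slope e' := ⟨_, rfl⟩
  have hf : ∀ t, a + b * t = D.Y e t - D.Y e' t := by
    intro t; rw [ha, hb]; simp only [Y_eq]; ring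
  have hpq : p < q := by
    simp only [hp, hq, max_lt_iff, lt_min_iff]
    exact ⟨⟨hl, h1⟩, h2, hl'⟩
  have h0 : ∀ t, p < t → t < q → a + b * t ≠ 0 := by
    intro t ht ht'
    simp only [hp, hq, max_lt_iff, lt_min_iff] at ht ht'
    rw [hf, sub_ne_zero]
    exact D.no_cross e e' t hne ht.1 ht'.1 ht.2 ht'.2
  obtain ⟨s1, s2, s3, s4⟩ := affine_signs a b p q hpq h0
  refine ⟨0 < a + b * ((p + q) / 2), fun h => ?_, fun h => ?_, fun h => ?_, fun h => ?_,
    fun h => ?_, fun h => ?_⟩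
  · have e1 : p = D.px (D.l e) := max_eq_left h.le
    rw [← s1, e1, hf, Y_l, sub_pos]
    rw [e1, hf, Y_l, sub_ne_zero]
    exact (D.not_on e' _ h h2).symm
  · have e1 : p = D.px (D.l e) := by rw [hp, h, max_self]
    rw [← s2, hb, sub_nonneg]
    rw [e1, hf, Y_l, ← h, Y_l, sub_self]
  · have e1 : p = D.px (D.l e') := max_eq_right h.le
    rw [← s1, e1, hf, Y_l, sub_pos]
    rw [e1, hf, Y_l, sub_ne_zero]
    exact D.not_on e _ h h1
  · have e1 : q = D.px (D.r e) := min_eq_left h.le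
    rw [← s3, e1, hf, Y_r, sub_pos]
    rw [e1, hf, Y_r, sub_ne_zero]
    exact (D.not_on e' _ h1 h).symm
  · have e1 : q = D.px (D.r e) := by rw [hq, h, min_self]
    rw [← s4, hb, sub_nonpos]
    rw [e1, hf, Y_r, ← h, Y_r, sub_self]
  · have e1 : q = D.px (D.r e') := min_eq_right h.le
    rw [← s3, e1, hf, Y_r, sub_pos]
    rw [e1, hf, Y_r, sub_ne_zero]
    exact D.not_on e _ h2 h

/-! ### The winding potential of a circulation -/

open Classical in
/-- Signed incidence, with edges oriented from left to right: `1` if `e` enters `v`, `-1` if it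
leaves `v`, and `0` otherwise. -/
noncomputable def inc (v : T) (e : ι) : ℝ :=
  (if D.r e = v then 1 else 0) - (if D.l e = v then 1 else 0)

/-- The edge `e` passes strictly under the vertex `v`. -/
def Under (v : T) (e : ι) : Prop :=
  D.px (D.l e) < D.px v ∧ D.px v < D.px (D.r e) ∧ D.Y e (D.px v) < D.py v

open Classical in
/-- A real key that sorts the edges at `v` clockwise, starting from the downward direction: first the
edges to the left from bottom to top, then the edges to the right from top to bottom. Both groups are
sorted by decreasing slope; the offset `4 > π` puts the second group last. -/
noncomputable def key (v : T) (e : ι) : ℝ :=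
  -Real.arctan (D.slope e) + if D.l e = v then 4 else 0

open Classical in
/-- Coefficient of `z e'` in the winding potential of the sector at `v` just clockwise of `e`: the
flow on the edges passing under `v`, plus the flow entering `v` along the edges met when turning
clockwise from the downward direction through `e`. -/
noncomputable def cwCoef (v : T) (e e' : ι) : ℝ :=
  (if D.Under v e' then 1 else 0) + if D.key v e' ≤ D.key v e then D.inc v e' else 0

open Classical in
/-- Coefficient of `z e'` in the winding potential of the sector at `v` just counterclockwise of
`e`. -/
noncomputable def ccwCoef (v : T) (e e' : ι) : ℝ :=
  (if D.Under v e' then 1 else 0) + if D.key v e' < D.key v e then D.inc v e' else 0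

lemma l_ne_r (e : ι) : D.l e ≠ D.r e := fun h => by
  have := D.lr e
  rw [h] at this; exact lt_irrefl _ this

lemma arctan_gap (s t : ℝ) : -Real.arctan s < -Real.arctan t + 4 := by
  have := Real.neg_pi_div_two_lt_arctan s
  have := Real.arctan_lt_pi_div_two t
  have := Real.pi_lt_four
  linarith

open Classical in
/-- At the right end of `e`, the potential clockwise of `e` counts the edges passing under that
vertex and the edges ending there which lie weakly below `e`. -/
lemma cw_r (e e' : ι) : D.cwCoef (D.r e) e e' =
    (if D.Under (D.r e) e' then 1 else 0) +
      if D.r e' = D.r e ∧ D.slope e ≤ D.slope e' then 1 else 0 := by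
  have h1 := D.l_ne_r e
  have h2 := D.l_ne_r e'
  have h3 := arctan_gap (D.slope e) (D.slope e')
  unfold cwCoef
  congr 1
  by_cases ha : D.r e' = D.r e
  · have : D.l e' ≠ D.r e := ha ▸ h2
    simp [key, inc, ha, h1, this, Real.arctan_strictMono.le_iff_le]
  · by_cases hb : D.l e' = D.r e
    · simp only [key, hb, if_true, h1, if_false, ha, false_and]
      rw [if_neg]; linarith
    · simp [inc, ha, hb]

open Classical in
/-- At the left end of `e`, the potential counterclockwise of `e` counts, up to the conservation law
at that vertex, the edges passing under it and the edges starting there which lie weakly below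
`e`. -/
lemma ccw_l (e e' : ι) : D.ccwCoef (D.l e) e e' - D.inc (D.l e) e' =
    (if D.Under (D.l e) e' then 1 else 0) +
      if D.l e' = D.l e ∧ D.slope e' ≤ D.slope e then 1 else 0 := by
  have h1 := D.l_ne_r e
  have h2 := D.l_ne_r e'
  have h3 := arctan_gap (D.slope e') (D.slope e)
  unfold ccwCoef
  rw [add_sub_assoc]
  congr 1
  by_cases ha : D.l e' = D.l e
  · have : D.r e' ≠ D.l e := ha ▸ h2.symm
    simp only [key, inc, ha, this, Real.arctan_strictMono.lt_iff_lt, if_true, if_false, true_and,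
      add_lt_add_iff_right, neg_lt_neg_iff]
    by_cases h : D.slope e < D.slope e'
    · simp [h, not_le.2 h]
    · simp [h, not_lt.1 h]
  · by_cases hb : D.r e' = D.l e
    · simp only [key, ha, if_true, if_false, false_and, add_zero]
      rw [if_pos h3]; simp
    · simp [inc, ha, hb]

/-- The vertex `v` lies strictly below the interior of the edge `e`. -/
def Below (e : ι) (v : T) : Prop :=
  D.px (D.l e) < D.px v ∧ D.px v < D.px (D.r e) ∧ D.py v < D.Y e (D.px v)

open Classical in
/-- Coefficient form of the invariance of the potential along the upper side of `e`. Both sides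
equal `1` if `e'` lies weakly below `e` over a nondegenerate interval, and `0` otherwise: such an `e'`
is either counted at the end of `e` or has its own end strictly below `e`. -/
lemma pointwise (e e' : ι) : D.cwCoef (D.r e) e e' + (if D.Below e (D.r e') then 1 else 0) =
    D.ccwCoef (D.l e) e e' - D.inc (D.l e) e' + (if D.Below e (D.l e') then 1 else 0) := by
  rw [cw_r, ccw_l]
  have hl := D.lr e
  have hl' := D.lr e'
  have eqr : ∀ {u v : T}, D.px u = D.px v ↔ u = v := D.px_inj.eq_iff
  by_cases hne : e = e'
  · subst hne
    simp [Under, Below]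
  by_cases h1 : D.px (D.l e') < D.px (D.r e)
  · by_cases h2 : D.px (D.l e) < D.px (D.r e')
    · obtain ⟨δ, a1, a2, a3, b1, b2, b3⟩ := D.overlap hne h1 h2
      have A : ((if D.Under (D.l e) e' then 1 else 0) +
          (if D.l e' = D.l e ∧ D.slope e' ≤ D.slope e then 1 else 0) : ℝ) +
          (if D.Below e (D.l e') then 1 else 0) = if δ then 1 else 0 := by
        unfold Under Below
        rcases lt_trichotomy (D.px (D.l e')) (D.px (D.l e)) with h | h | h
        · simp [h, a1 h, ← eqr, h.ne, h2, h.not_gt]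
        · simp [eqr.1 h, ← a2 (eqr.1 h)]
        · simp [h, a3 h, ← eqr, h.ne', h1, h.not_gt]
      have B : ((if D.Under (D.r e) e' then 1 else 0) +
          (if D.r e' = D.r e ∧ D.slope e ≤ D.slope e' then 1 else 0) : ℝ) +
          (if D.Below e (D.r e') then 1 else 0) = if δ then 1 else 0 := by
        unfold Under Below
        rcases lt_trichotomy (D.px (D.r e')) (D.px (D.r e)) with h | h | h
        · simp [h, b3 h, ← eqr, h.ne, h2, h.not_gt]
        · simp [eqr.1 h, ← b2 (eqr.1 h)]
        · simp [h, b1 h, ← eqr, h.ne', h1, h.not_gt]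
      rw [A, B]
    · have g1 : ¬ D.px (D.r e) < D.px (D.r e') := by linarith
      have g2 : ¬ D.px (D.l e) < D.px (D.l e') := by linarith
      have g3 : D.px (D.r e') ≠ D.px (D.r e) := by intro h; linarith
      have g4 : D.px (D.l e') ≠ D.px (D.l e) := by intro h; linarith
      simp [Under, Below, ← eqr, g1, g2, g3, g4, h2]
  · have g1 : ¬ D.px (D.r e') < D.px (D.r e) := by linarith
    have g2 : ¬ D.px (D.l e') < D.px (D.l e) := by linarith
    have g3 : D.px (D.r e') ≠ D.px (D.r e) := by intro h; linarith
    have g4 : D.px (D.l e') ≠ D.px (D.l e) := by intro h; linarith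
    simp [Under, Below, ← eqr, g1, g2, g3, g4, h1]

/-- Distinct edges at a vertex leave it in distinct directions. -/
lemma key_inj {v : T} {e e' : ι} (he : D.l e = v ∨ D.r e = v) (he' : D.l e' = v ∨ D.r e' = v)
    (hk : D.key v e = D.key v e') : e = e' := by
  by_contra hne
  have h1 := arctan_gap (D.slope e) (D.slope e')
  have h2 := arctan_gap (D.slope e') (D.slope e)
  have hl := D.lr e
  have hl' := D.lr e'
  unfold key at hk
  -- equal keys force both edges to the same side of `v` with the same slope
  rcases he with he | he <;> rcases he' with he' | he'
  · have hs : D.slope e = D.slope e' := Real.arctan_injective (by simpa [he, he'] using hk)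
    obtain ⟨t, ht1, ht2⟩ := exists_between (a₁ := D.px v)
      (a₂ := min (D.px (D.r e)) (D.px (D.r e'))) (by rw [← he]; simp [hl]; rw [he, ← he']; exact hl')
    rw [lt_min_iff] at ht2
    refine D.no_cross e e' t hne (by rwa [he]) ht2.1 (by rwa [he']) ht2.2 ?_
    change D.Y e t = D.Y e' t
    rw [Y_eq, Y_eq, hs, he, he']
  · have : D.l e' ≠ v := he' ▸ D.l_ne_r e'
    rw [if_pos he, if_neg this] at hk; linarith
  · have : D.l e ≠ v := he ▸ D.l_ne_r e
    rw [if_pos he', if_neg this] at hk; linarith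
  · have g1 : D.l e ≠ v := he ▸ D.l_ne_r e
    have g2 : D.l e' ≠ v := he' ▸ D.l_ne_r e'
    have hs : D.slope e = D.slope e' := Real.arctan_injective (by simpa [g1, g2] using hk)
    obtain ⟨t, ht1, ht2⟩ := exists_between (a₂ := D.px v)
      (a₁ := max (D.px (D.l e)) (D.px (D.l e'))) (by rw [← he]; simp [hl]; rw [he, ← he']; exact hl')
    rw [max_lt_iff] at ht1
    refine D.no_cross e e' t hne ht1.1 (by rwa [he]) ht1.2 (by rwa [he']) ?_
    change D.Y e t = D.Y e' t
    have i1 := D.Y_r e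
    have i2 := D.Y_r e'
    rw [Y_eq] at i1 i2 ⊢
    rw [Y_eq]
    rw [he] at i1; rw [he', ← hs] at i2; rw [← hs]
    linear_combination i1 - i2

lemma inc_eq_zero {v : T} {e : ι} (h : ¬ (D.l e = v ∨ D.r e = v)) : D.inc v e = 0 := by
  push Not at h
  simp [inc, h.1, h.2]

variable [Fintype ι]

/-- Net flow into each vertex; its kernel is the space of circulations. -/
noncomputable def boundary : (ι → ℝ) →ₗ[ℝ] (T → ℝ) where
  toFun z v := ∑ e, z e * D.inc v e
  map_add' z z' := by ext v; simp [add_mul, Finset.sum_add_distrib]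
  map_smul' c z := by ext v; simp [mul_assoc, Finset.mul_sum]

/-- The winding potential of the sector at `v` just clockwise of `e`. -/
noncomputable def cw (v : T) (e : ι) : (ι → ℝ) →ₗ[ℝ] ℝ where
  toFun z := ∑ e', z e' * D.cwCoef v e e'
  map_add' z z' := by simp [add_mul, Finset.sum_add_distrib]
  map_smul' c z := by simp [mul_assoc, Finset.mul_sum]

/-- The winding potential of the sector at `v` just counterclockwise of `e`. -/
noncomputable def ccw (v : T) (e : ι) : (ι → ℝ) →ₗ[ℝ] ℝ where
  toFun z := ∑ e', z e' * D.ccwCoef v e e'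
  map_add' z z' := by simp [add_mul, Finset.sum_add_distrib]
  map_smul' c z := by simp [mul_assoc, Finset.mul_sum]

lemma circ_apply {z : ι → ℝ} (hz : D.boundary z = 0) (v : T) : ∑ e, z e * D.inc v e = 0 :=
  congrFun hz v

/-- The potential is constant along the upper side of an edge: the two values differ by the sum of
the conservation laws at the vertices below the edge and at its left end. -/
lemma cw_r_eq_ccw_l [Fintype T] {z : ι → ℝ} (hz : D.boundary z = 0) (e : ι) :
    D.cw (D.r e) e z = D.ccw (D.l e) e z := by
  classical
  have h1 := D.circ_apply hz (D.l e)
  have h2 : ∑ e', z e' * ((if D.Below e (D.r e') then 1 else 0) -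
      (if D.Below e (D.l e') then 1 else 0)) = 0 := by
    have : ∀ e', z e' * ((if D.Below e (D.r e') then 1 else 0) -
      (if D.Below e (D.l e') then 1 else 0)) =
        ∑ v, (if D.Below e v then z e' * D.inc v e' else 0) := by
      intro e'
      have : ∀ v, (if D.Below e v then z e' * D.inc v e' else 0) =
        z e' * ((if D.r e' = v then (if D.Below e v then 1 else 0) else 0) -
          (if D.l e' = v then (if D.Below e v then 1 else 0) else 0)) := by
        intro v; unfold inc; split_ifs <;> simp
      simp only [this]
      rw [← Finset.mul_sum, Finset.sum_sub_distrib]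
      simp
    simp only [this]
    rw [Finset.sum_comm]
    apply Finset.sum_eq_zero
    intro v _
    by_cases h : D.Below e v
    · simp only [h, if_true]; exact D.circ_apply hz v
    · simp [h]
  change ∑ e', z e' * D.cwCoef (D.r e) e e' = ∑ e', z e' * D.ccwCoef (D.l e) e e'
  rw [← sub_eq_zero, ← Finset.sum_sub_distrib]
  have h3 : ∀ e', z e' * D.cwCoef (D.r e) e e' - z e' * D.ccwCoef (D.l e) e e' =
      - (z e' * D.inc (D.l e) e') - z e' * ((if D.Below e (D.r e') then 1 else 0) -
      (if D.Below e (D.l e') then 1 else 0)) := by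
    intro e'
    linear_combination z e' * D.pointwise e e'
  simp only [h3]
  rw [Finset.sum_sub_distrib, Finset.sum_neg_distrib, h1, h2]; simp

/-- The potential jumps by the flow when an edge is crossed. -/
lemma cw_sub_ccw {v : T} {e : ι} (he : D.l e = v ∨ D.r e = v) (z : ι → ℝ) :
    D.cw v e z - D.ccw v e z = z e * D.inc v e := by
  classical
  change ∑ e', z e' * D.cwCoef v e e' - ∑ e', z e' * D.ccwCoef v e e' = _
  rw [← Finset.sum_sub_distrib, Finset.sum_eq_single e]
  · simp only [cwCoef, ccwCoef, le_refl, lt_irrefl, if_true, if_false]; ring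
  · intro e' _ hne
    by_cases he' : D.l e' = v ∨ D.r e' = v
    · have : D.key v e' ≠ D.key v e := fun h => hne (D.key_inj he' he h)
      simp [cwCoef, ccwCoef, lt_iff_le_and_ne, this]
    · simp [cwCoef, ccwCoef, D.inc_eq_zero he']
  · simp

/-- If `e` is not the only edge at `v`, there is a next edge `n ≠ e` clockwise of it, and the
potential agrees on the sector between them. -/
lemma exists_next {v : T} {e e₂ : ι} (he : D.l e = v ∨ D.r e = v)
    (he₂ : D.l e₂ = v ∨ D.r e₂ = v) (hne : e₂ ≠ e) :
    ∃ n, (D.l n = v ∨ D.r n = v) ∧ n ≠ e ∧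
      ∀ z, D.boundary z = 0 → D.cw v e z = D.ccw v n z := by
  classical
  let s : Finset ι := Finset.univ.filter fun e' => D.l e' = v ∨ D.r e' = v
  have hs : ∀ e', e' ∈ s ↔ (D.l e' = v ∨ D.r e' = v) := by simp [s]
  by_cases hb : (s.filter fun e' => D.key v e < D.key v e').Nonempty
  · obtain ⟨n, hn, hmin⟩ := Finset.exists_min_image _ (D.key v) hb
    simp only [Finset.mem_filter, hs] at hn hmin
    refine ⟨n, hn.1, ?_, fun z _ => ?_⟩
    · rintro rfl; exact lt_irrefl _ hn.2
    · change ∑ e', z e' * D.cwCoef v e e' = ∑ e', z e' * D.ccwCoef v n e'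
      refine Finset.sum_congr rfl fun e' _ => ?_
      congr 1
      unfold cwCoef ccwCoef
      congr 1
      by_cases he' : D.l e' = v ∨ D.r e' = v
      · have : D.key v e' ≤ D.key v e ↔ D.key v e' < D.key v n := by
          constructor
          · intro h; exact lt_of_le_of_lt h hn.2
          · intro h
            by_contra h'
            exact absurd (hmin e' ⟨he', not_le.1 h'⟩) (not_le.2 h)
        simp [this]
      · simp [D.inc_eq_zero he']
  -- `e` comes last, so its clockwise successor is the first edge; all edges at `v` are then
  -- counted before the former and none before the latter, a difference killed by conservation.
  · obtain ⟨n, hn, hmin⟩ := Finset.exists_min_image s (D.key v) ⟨e, (hs e).2 he⟩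
    rw [hs] at hn
    rw [Finset.not_nonempty_iff_eq_empty, Finset.filter_eq_empty_iff] at hb
    simp only [hs, not_lt] at hb hmin
    refine ⟨n, hn, ?_, fun z hz => ?_⟩
    · rintro rfl
      exact hne (D.key_inj he₂ he (le_antisymm (hb he₂) (hmin _ he₂)))
    · change ∑ e', z e' * D.cwCoef v e e' = ∑ e', z e' * D.ccwCoef v n e'
      rw [← sub_eq_zero, ← Finset.sum_sub_distrib, ← D.circ_apply hz v]
      refine Finset.sum_congr rfl fun e' _ => ?_
      unfold cwCoef ccwCoef
      by_cases he' : D.l e' = v ∨ D.r e' = v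
      · rw [if_pos (hb he'), if_neg (not_lt.2 (hmin e' he'))]; ring
      · simp [D.inc_eq_zero he']

/-- The potential is constant along each side of an edge with ends `u` and `v`. -/
lemma cw_eq_ccw [Fintype T] {u v : T} {e : ι} (h : (D.l e = u ∧ D.r e = v) ∨ (D.l e = v ∧ D.r e = u))
    {z : ι → ℝ} (hz : D.boundary z = 0) : D.cw u e z = D.ccw v e z := by
  have key := D.cw_r_eq_ccw_l hz e
  rcases h with ⟨rfl, rfl⟩ | ⟨rfl, rfl⟩
  · have h1 := D.cw_sub_ccw (v := D.l e) (e := e) (Or.inl rfl) z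
    have h2 := D.cw_sub_ccw (v := D.r e) (e := e) (Or.inr rfl) z
    have i1 : D.inc (D.l e) e = -1 := by simp [inc, (D.l_ne_r e).symm]
    have i2 : D.inc (D.r e) e = 1 := by simp [inc, D.l_ne_r e]
    rw [i1] at h1; rw [i2] at h2
    linarith
  · exact key

/-- A circulation whose potentials on the two sides of an edge agree vanishes on that edge. -/
lemma ccw_diff [Fintype T] {u v : T} {e : ι} (h : (D.l e = u ∧ D.r e = v) ∨ (D.l e = v ∧ D.r e = u))
    {z : ι → ℝ} (hz : D.boundary z = 0) (heq : D.ccw u e z = D.ccw v e z) : z e = 0 := by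
  have h1 := D.cw_eq_ccw h hz
  have h2 := D.cw_sub_ccw (v := u) (e := e) (h.imp And.left And.right) z
  have : D.inc u e ≠ 0 := by
    rcases h with ⟨rfl, rfl⟩ | ⟨rfl, rfl⟩
    · simp [inc, (D.l_ne_r e).symm]
    · simp [inc, D.l_ne_r e]
  rw [h1, heq, sub_self] at h2
  exact (mul_eq_zero.1 h2.symm).resolve_right this

/-- Rank-nullity: the boundary map has rank at most `|T| - 1`, as net flows sum to zero. -/
lemma finrank_circ [Fintype T] [Nonempty T] :
    Fintype.card ι + 1 ≤ Fintype.card T + Module.finrank ℝ (LinearMap.ker D.boundary) := by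
  classical
  have hrn := LinearMap.finrank_range_add_finrank_ker D.boundary
  rw [Module.finrank_fintype_fun_eq_card] at hrn
  let S : (T → ℝ) →ₗ[ℝ] ℝ := ∑ v, LinearMap.proj v
  have hS : ∀ g, S g = ∑ v, g v := fun g => by simp [S]
  have hle : LinearMap.range D.boundary ≤ LinearMap.ker S := by
    rintro _ ⟨z, rfl⟩
    rw [LinearMap.mem_ker, hS]
    change ∑ v, ∑ e, z e * D.inc v e = 0
    rw [Finset.sum_comm]
    refine Finset.sum_eq_zero fun e _ => ?_
    rw [← Finset.mul_sum]
    simp [inc, Finset.sum_sub_distrib]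
  have hlt : LinearMap.range D.boundary < ⊤ := by
    refine lt_of_le_of_lt hle (lt_top_iff_ne_top.2 fun h => ?_)
    obtain ⟨v⟩ := ‹Nonempty T›
    have : Pi.single v (1 : ℝ) ∈ LinearMap.ker S := h ▸ Submodule.mem_top
    rw [LinearMap.mem_ker, hS] at this
    simp at this
  have := Submodule.finrank_lt hlt.ne
  rw [Module.finrank_fintype_fun_eq_card] at this
  omega

end SweepDrawing

/-! ### The edge bound -/

/-- Functions constant along a self-map `ψ` factor through the classes generated by `ψ`, and every
class contains the three distinct elements `e`, `ψ e`, `ψ (ψ e)`. The map `ψ` need not be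
injective. -/
lemma finrank_invariant {E : Type*} [Fintype E] (ψ : E → E) (h1 : ∀ e, ψ e ≠ e)
    (h2 : ∀ e, ψ (ψ e) ≠ e) (K : Submodule ℝ (E → ℝ)) (hK : ∀ g ∈ K, ∀ e, g (ψ e) = g e) :
    3 * Module.finrank ℝ K ≤ Fintype.card E := by
  classical
  let Q := Quot fun e e' => e' = ψ e
  have : Finite Q := Finite.of_surjective (Quot.mk _) Quot.mk_surjective
  have : Fintype Q := Fintype.ofFinite Q
  have hf : Module.finrank ℝ K ≤ Fintype.card Q := by
    rw [← Module.finrank_fintype_fun_eq_card (R := ℝ) (η := Q)]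
    let L : (Q → ℝ) →ₗ[ℝ] (E → ℝ) := LinearMap.funLeft ℝ ℝ (Quot.mk _)
    have hle : K ≤ LinearMap.range L := by
      intro g hg
      refine ⟨Quot.lift g ?_, ?_⟩
      · rintro e _ rfl; exact (hK g hg e).symm
      · ext e; rfl
    exact (Submodule.finrank_mono hle).trans (LinearMap.finrank_range_le L)
  have hc : 3 * Fintype.card Q ≤ Fintype.card E := by
    rw [← Finset.card_univ (α := E), Finset.card_eq_sum_card_fiberwise
      (f := (Quot.mk _ : E → Q)) (t := Finset.univ) (by simp)]
    rw [mul_comm, ← smul_eq_mul, ← Finset.card_univ]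
    refine Finset.card_nsmul_le_sum _ _ _ fun q _ => ?_
    obtain ⟨e, rfl⟩ := Quot.exists_rep q
    have hq : ∀ d, (Quot.mk _ d : Q) = Quot.mk _ (ψ d) := fun d => Quot.sound rfl
    have e1 : (Quot.mk _ (ψ e) : Q) = Quot.mk _ e := (hq e).symm
    have e2 : (Quot.mk _ (ψ (ψ e)) : Q) = Quot.mk _ e := (hq _).symm.trans e1
    have : ({e, ψ e, ψ (ψ e)} : Finset E).card = 3 :=
      Finset.card_eq_three.2 ⟨_, _, _, (h1 e).symm, (h2 e).symm, (h1 (ψ e)).symm, rfl⟩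
    rw [← this]
    refine Finset.card_le_card ?_
    intro d hd
    simp only [Finset.mem_insert, Finset.mem_singleton] at hd
    rcases hd with rfl | rfl | rfl <;> simp [e1, e2]
  omega

/-- The bound `|X| ≤ 3 |W| - 6` for a simple graph with vertex type `W`, edge type `X` and minimum
degree at least two, whose subdivision has a straight-line drawing. The edge `x` has ends
`en (x, false)` and `en (x, true)`, and `(x, i)` also labels the half of `x` from `en (x, i)` to the
midpoint `x`. -/
theorem core_bound {W X : Type*} [Fintype W] [Fintype X] [Nonempty X] (en : X × Bool → W)
    (hloop : ∀ x i, en (x, i) ≠ en (x, !i))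
    (hsimple : ∀ x y i j, en (x, i) = en (y, j) → en (x, !i) = en (y, !j) → x = y)
    (hdeg : ∀ e, ∃ e', e' ≠ e ∧ en e' = en e)
    (D : SweepDrawing (W ⊕ X) (X × Bool))
    (hD : ∀ e, (D.l e = Sum.inl (en e) ∧ D.r e = Sum.inr e.1) ∨
      (D.l e = Sum.inr e.1 ∧ D.r e = Sum.inl (en e))) :
    Fintype.card X + 6 ≤ 3 * Fintype.card W := by
  classical
  have incW : ∀ a e, (D.l e = Sum.inl a ∨ D.r e = Sum.inl a) ↔ en e = a := by
    intro a e; rcases hD e with ⟨h, hr⟩ | ⟨h, hr⟩ <;> simp [h, hr]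
  have incX : ∀ x e, (D.l e = Sum.inr x ∨ D.r e = Sum.inr x) ↔ e.1 = x := by
    intro x e; rcases hD e with ⟨h, hr⟩ | ⟨h, hr⟩ <;> simp [h, hr]
  -- the face boundary walk passes straight through a subdivision vertex
  have stepX : ∀ x i z, D.boundary z = 0 →
      D.ccw (Sum.inl (en (x, i))) (x, i) z = D.ccw (Sum.inr x) (x, !i) z := by
    intro x i z hz
    obtain ⟨n, hn, hne, hw⟩ := D.exists_next (v := Sum.inr x) (e := (x, i)) (e₂ := (x, !i))
      ((incX _ _).2 rfl) ((incX _ _).2 rfl) (by simp)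
    rw [incX] at hn
    obtain ⟨y, j⟩ := n
    obtain rfl : y = x := hn
    have hj : j = !i := by
      have hji : j ≠ i := fun h => hne (by rw [h])
      exact Bool.eq_not.2 hji
    subst hj
    rw [← hw z hz, ← D.cw_eq_ccw (hD (y, i)).symm hz]
  -- at a vertex of `W` the walk turns into the next half-edge, which is a different one by the
  -- degree condition
  have stepW : ∀ e : X × Bool, ∃ n, en n = en (e.1, !e.2) ∧ n ≠ (e.1, !e.2) ∧
      ∀ z, D.boundary z = 0 →
        D.ccw (Sum.inr e.1) (e.1, !e.2) z = D.ccw (Sum.inl (en n)) n z := by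
    intro e
    obtain ⟨e', he', hen⟩ := hdeg (e.1, !e.2)
    obtain ⟨n, hn, hne, hw⟩ := D.exists_next (v := Sum.inl (en (e.1, !e.2))) (e := (e.1, !e.2))
      (e₂ := e') ((incW _ _).2 rfl) ((incW _ _).2 hen) he'
    rw [incW] at hn
    refine ⟨n, hn, hne, fun z hz => ?_⟩
    rw [hn, ← hw z hz, D.cw_eq_ccw (hD (e.1, !e.2)) hz]
  choose ψ hψ1 hψ2 hψ3 using stepW
  have p1 : ∀ e, ψ e ≠ e := by
    intro e h
    have := hψ1 e
    rw [h] at this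
    exact hloop e.1 e.2 this
  have p2 : ∀ e, ψ (ψ e) ≠ e := by
    intro e h
    have h1 := hψ1 e
    have h2 := hψ1 (ψ e)
    rw [h] at h2
    have hxy : e.1 = (ψ e).1 := hsimple e.1 (ψ e).1 e.2 (!(ψ e).2) h2 (by simpa using h1.symm)
    have hne := hψ2 e
    have hij : (ψ e).2 ≠ e.2 := by
      intro hij
      exact p1 e (Prod.ext hxy.symm hij)
    apply hne
    refine Prod.ext hxy.symm ?_
    revert hij
    cases (ψ e).2 <;> cases e.2 <;> simp
  -- the potentials on the left sides of the half-edges leaving `W`, shifted by a constant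
  let Ψ : (LinearMap.ker D.boundary × ℝ) →ₗ[ℝ] (X × Bool → ℝ) :=
    LinearMap.pi fun e => ((D.ccw (Sum.inl (en e)) e).comp
      (LinearMap.ker D.boundary).subtype).coprod LinearMap.id
  have hΨ : ∀ z c e, Ψ (z, c) e = D.ccw (Sum.inl (en e)) e z + c := fun z c e => by simp [Ψ]
  have hinj : Function.Injective Ψ := by
    rw [← LinearMap.ker_eq_bot, LinearMap.ker_eq_bot']
    rintro ⟨⟨z, hz⟩, c⟩ h0
    rw [LinearMap.mem_ker] at hz
    have h1 : ∀ e, D.ccw (Sum.inl (en e)) e z = -c := by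
      intro e
      have := congrFun h0 e
      rw [hΨ] at this
      simp only [Pi.zero_apply] at this
      linarith
    have hz0 : z = 0 := by
      ext ⟨x, i⟩
      refine D.ccw_diff (hD (x, i)) hz ?_
      have h2 := stepX x (!i) z hz
      rw [Bool.not_not] at h2
      simp only
      rw [h1, ← h2, h1]
    subst hz0
    obtain ⟨x⟩ := ‹Nonempty X›
    have := h1 (x, true)
    rw [map_zero] at this
    have hc : c = 0 := by linarith
    subst hc
    rfl
  have hinv : ∀ g ∈ LinearMap.range Ψ, ∀ e, g (ψ e) = g e := by
    rintro _ ⟨⟨⟨z, hz⟩, c⟩, rfl⟩ e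
    rw [LinearMap.mem_ker] at hz
    rw [hΨ, hΨ]
    simp only
    rw [← hψ3 e z hz, ← stepX e.1 e.2 z hz]
  have hub := finrank_invariant ψ p1 p2 _ hinv
  rw [LinearMap.finrank_range_of_inj hinj, Module.finrank_prod, Module.finrank_self] at hub
  have : Nonempty (W ⊕ X) := ⟨Sum.inr (Classical.arbitrary X)⟩
  have hlb := D.finrank_circ
  simp only [Fintype.card_prod, Fintype.card_bool, Fintype.card_sum] at hub hlb
  omega

/-! ### From planar drawings to sweep drawings -/

lemma IsPlanarDrawing.comp_linear {V : Type*} {G : SimpleGraph V} {ρ : V → ℝ × ℝ}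
    (h : IsPlanarDrawing G ρ) (f : ℝ × ℝ →ₗ[ℝ] ℝ × ℝ) (hf : Function.Injective f) :
    IsPlanarDrawing G (f ∘ ρ) where
  inj := hf.comp h.inj
  edge_inter := by
    intro u v x y huv hxy hne p hp hp'
    simp only [Function.comp_apply] at hp hp' ⊢
    have himg : ∀ a b, segment ℝ (f a) (f b) = f '' segment ℝ a b :=
      fun a b => (image_segment ℝ f.toAffineMap a b).symm
    rw [himg] at hp hp'
    obtain ⟨a, ha, rfl⟩ := hp
    obtain ⟨b, hb, hab⟩ := hp'
    obtain rfl : b = a := hf hab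
    obtain ⟨w, h1, h2, h3⟩ := h.edge_inter huv hxy hne b ha hb
    exact ⟨w, h1, h2, by rw [← h3]⟩
  vertex_not_on_edge := by
    intro u v w huv h1 h2 hw
    simp only [Function.comp_apply] at hw
    rw [show segment ℝ (f (ρ u)) (f (ρ v)) = f '' segment ℝ (ρ u) (ρ v) from
      (image_segment ℝ f.toAffineMap _ _).symm] at hw
    obtain ⟨a, ha, haw⟩ := hw
    obtain rfl : a = ρ w := hf haw
    exact h.vertex_not_on_edge huv h1 h2 ha

/-- A generic horizontal shear makes the abscissas of the vertices distinct. -/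
lemma exists_generic_drawing {V : Type*} [Finite V] {G : SimpleGraph V} {ρ : V → ℝ × ℝ}
    (h : IsPlanarDrawing G ρ) :
    ∃ ρ' : V → ℝ × ℝ, IsPlanarDrawing G ρ' ∧ Function.Injective fun v => (ρ' v).1 := by
  obtain ⟨c, hc⟩ := (Set.finite_range fun p : V × V =>
    -((ρ p.1).1 - (ρ p.2).1) / ((ρ p.1).2 - (ρ p.2).2)).exists_notMem
  let f : ℝ × ℝ →ₗ[ℝ] ℝ × ℝ :=
    (LinearMap.fst ℝ ℝ ℝ + c • LinearMap.snd ℝ ℝ ℝ).prod (LinearMap.snd ℝ ℝ ℝ)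
  have hf : ∀ p, f p = (p.1 + c * p.2, p.2) := fun p => by simp [f]
  refine ⟨f ∘ ρ, h.comp_linear f ?_, ?_⟩
  · intro p q hpq
    rw [hf, hf, Prod.mk.injEq] at hpq
    obtain ⟨h1, h2⟩ := hpq
    rw [h2] at h1
    exact Prod.ext (by linarith) h2
  · intro u v huv
    simp only [Function.comp_apply, hf] at huv
    apply h.inj
    by_cases hy : (ρ u).2 = (ρ v).2
    · rw [hy] at huv
      exact Prod.ext (by linarith) hy
    · refine absurd ⟨(u, v), ?_⟩ hc
      have : (ρ u).2 - (ρ v).2 ≠ 0 := sub_ne_zero.2 hy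
      simp only
      rw [div_eq_iff this]
      linarith

lemma interp_mem_segment {T : Type*} (ρ : T → ℝ × ℝ) (a b : T) (t : ℝ)
    (h1 : (ρ a).1 < t) (h2 : t < (ρ b).1) :
    (t, interp (fun v => (ρ v).1) (fun v => (ρ v).2) a b t) ∈ segment ℝ (ρ a) (ρ b) := by
  rw [segment_eq_image']
  have h3 : 0 < (ρ b).1 - (ρ a).1 := by linarith
  refine ⟨(t - (ρ a).1) / ((ρ b).1 - (ρ a).1), ⟨div_nonneg (by linarith) h3.le, ?_⟩, ?_⟩
  · rw [div_le_one h3]; linarith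
  · ext
    · simp; field_simp; ring
    · simp [interp]; field_simp

/-- A family of distinct edges of `G`, indexed by `ι`, with ends labelled by `T` through `τ`,
inherits a sweep drawing from a planar drawing of `G`. -/
lemma exists_sweepDrawing {V T ι : Type*} {G : SimpleGraph V} {ρ : V → ℝ × ℝ}
    (h : IsPlanarDrawing G ρ) (hx : Function.Injective fun v => (ρ v).1)
    (τ : T → V) (hτ : Function.Injective τ) (s t : ι → T)
    (hadj : ∀ e, G.Adj (τ (s e)) (τ (t e)))
    (hne : ∀ e e', e ≠ e' → s(τ (s e), τ (t e)) ≠ s(τ (s e'), τ (t e'))) :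
    ∃ D : SweepDrawing T ι, ∀ e, (D.l e = s e ∧ D.r e = t e) ∨ (D.l e = t e ∧ D.r e = s e) := by
  classical
  let l : ι → T := fun e => if (ρ (τ (s e))).1 < (ρ (τ (t e))).1 then s e else t e
  let r : ι → T := fun e => if (ρ (τ (s e))).1 < (ρ (τ (t e))).1 then t e else s e
  have hlr : ∀ e, (l e = s e ∧ r e = t e) ∨ (l e = t e ∧ r e = s e) := by
    intro e
    by_cases hc : (ρ (τ (s e))).1 < (ρ (τ (t e))).1
    · exact Or.inl ⟨if_pos hc, if_pos hc⟩
    · exact Or.inr ⟨if_neg hc, if_neg hc⟩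
  have hadj' : ∀ e, G.Adj (τ (l e)) (τ (r e)) := by
    intro e
    rcases hlr e with ⟨h1, h2⟩ | ⟨h1, h2⟩ <;> rw [h1, h2]
    exacts [hadj e, (hadj e).symm]
  have hsym : ∀ e, s(τ (l e), τ (r e)) = s(τ (s e), τ (t e)) := by
    intro e
    rcases hlr e with ⟨h1, h2⟩ | ⟨h1, h2⟩ <;> rw [h1, h2]
    exact Sym2.eq_swap
  refine ⟨{ px := fun v => (ρ (τ v)).1, py := fun v => (ρ (τ v)).2, l := l, r := r,
            px_inj := hx.comp hτ, lr := ?_, no_cross := ?_, not_on := ?_ }, hlr⟩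
  · intro e
    by_cases hc : (ρ (τ (s e))).1 < (ρ (τ (t e))).1
    · simp [l, r, hc]
    · have : (ρ (τ (t e))).1 ≠ (ρ (τ (s e))).1 := fun h' => (hadj e).ne (hx h'.symm)
      simpa [l, r, hc] using lt_of_le_of_ne (not_lt.1 hc) this
  · intro e e' u hee h1 h2 h3 h4 heq
    have m1 := interp_mem_segment (ρ ∘ τ) (l e) (r e) u h1 h2
    have m2 := interp_mem_segment (ρ ∘ τ) (l e') (r e') u h3 h4
    simp only [Function.comp_apply] at m1 m2
    rw [← heq] at m2
    obtain ⟨w, hw, -, hp⟩ := h.edge_inter (hadj' e) (hadj' e')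
      (by rw [hsym, hsym]; exact hne e e' hee) _ m1 m2
    have hu : u = (ρ w).1 := congrArg Prod.fst hp
    rcases hw with rfl | rfl <;> linarith
  · intro e v h1 h2 heq
    have m1 := interp_mem_segment (ρ ∘ τ) (l e) (r e) _ h1 h2
    simp only [Function.comp_apply] at m1
    rw [heq] at m1
    refine h.vertex_not_on_edge (hadj' e) ?_ ?_ m1
    · intro h'; rw [h'] at h1; exact lt_irrefl _ h1
    · intro h'; rw [h'] at h2; exact lt_irrefl _ h2

/-! ### Counting neighborhood pairs -/

/-- The pairs in `W` that are the exact neighborhood of a vertex outside `V'`. Keeping `V'` fixed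
while `W` shrinks allows induction on `W`. -/
def classPairs {V : Type*} (G : SimpleGraph V) (V' W : Finset V) : Set (Sym2 V) :=
  {q | ∃ v w : V, v ≠ w ∧ q = s(v, w) ∧ v ∈ W ∧ w ∈ W ∧
    ∃ x : V, x ∉ V' ∧ G.neighborSet x = {v, w}}

/-- The bound when every vertex of `W` lies on at least two pairs. -/
lemma classPairs_core {V : Type*} [Fintype V] (G : SimpleGraph V) {ρ : V → ℝ × ℝ}
    (h : IsPlanarDrawing G ρ) (hx : Function.Injective fun v => (ρ v).1)
    (V' W : Finset V) (hW : W ⊆ V') (hcard : 3 ≤ W.card)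
    (hdeg : ∀ v ∈ W, 2 ≤ {q ∈ classPairs G V' W | v ∈ q}.ncard) :
    (classPairs G V' W).ncard + 6 ≤ 3 * W.card := by
  classical
  let X := classPairs G V' W
  have hex : ∀ q : X, ∃ (f : Bool → W) (x : V), f true ≠ f false ∧
      q.1 = s((f true : V), (f false : V)) ∧ x ∉ V' ∧
        G.neighborSet x = {(f true : V), (f false : V)} := by
    rintro ⟨q, v, w, hvw, rfl, hv, hw, x, hxV, hxN⟩
    exact ⟨fun b => if b then ⟨v, hv⟩ else ⟨w, hw⟩, x, by simpa using hvw, by simp, hxV,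
      by simpa using hxN⟩
  choose f x hf hq hxV hxN using hex
  have hxinj : Function.Injective x := by
    intro p q hpq
    have h1 := hxN p
    rw [hpq, hxN q] at h1
    apply Subtype.ext
    rw [hq, hq]
    rw [Set.pair_eq_pair_iff] at h1
    rw [Sym2.eq_iff]
    tauto
  have hq' : ∀ p i, p.1 = s((f p i : V), (f p (!i) : V)) := by
    intro p i
    cases i
    · rw [hq, Sym2.eq_swap]; rfl
    · exact hq p
  let en : X × Bool → W := fun e => f e.1 e.2
  have hadj : ∀ e : X × Bool, G.Adj (f e.1 e.2) (x e.1) := by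
    rintro ⟨p, i⟩
    rw [SimpleGraph.adj_comm, ← SimpleGraph.mem_neighborSet, hxN]
    cases i <;> simp
  let τ : W ⊕ X → V := Sum.elim (fun w => w.1) x
  have hτ : Function.Injective τ := by
    refine Function.Injective.sumElim Subtype.val_injective hxinj ?_
    intro w p hwp
    exact hxV p (hwp ▸ hW w.2)
  have hfinj : ∀ p i j, f p i = f p j → i = j := by
    intro p i j hij
    have h1 := hf p
    cases i <;> cases j
    exacts [rfl, absurd hij.symm h1, absurd hij h1, rfl]
  obtain ⟨D, hD⟩ := exists_sweepDrawing h hx τ hτ (fun e : X × Bool => Sum.inl (en e))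
    (fun e => Sum.inr e.1) hadj (by
      rintro ⟨p, i⟩ ⟨p', j⟩ hne heq
      apply hne
      simp only [τ, Sum.elim_inl, Sum.elim_inr, en, Sym2.eq_iff] at heq
      rcases heq with ⟨h1, h2⟩ | ⟨h1, h2⟩
      · obtain rfl := hxinj h2
        rw [hfinj p i j (Subtype.ext h1)]
      · exact absurd (h1 ▸ hW (f p i).2) (hxV p'))
  have hXfin : Fintype X := Fintype.ofFinite X
  by_cases hXe : Nonempty X
  · have hb := core_bound en (fun p i hl => ?_) (fun p p' i j h1 h2 => ?_) (fun e => ?_) D hD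
    · rw [Fintype.card_coe] at hb
      rwa [← Nat.card_coe_set_eq, Nat.card_eq_fintype_card]
    · have := hfinj p _ _ hl
      simp at this
    · apply Subtype.ext
      rw [hq' p i, hq' p' j]
      simp only [en] at h1 h2
      rw [h1, h2]
    · have h2 := hdeg (en e) (en e).2
      obtain ⟨q, ⟨hqX, hqe⟩, hqne⟩ := Set.exists_ne_of_one_lt_ncard (a := e.1.1) h2
      rw [show q = _ from hq ⟨q, hqX⟩, Sym2.mem_iff] at hqe
      rcases hqe with hqe | hqe
      · exact ⟨(⟨q, hqX⟩, true), fun h' => hqne (by rw [← h']), (Subtype.ext hqe).symm⟩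
      · exact ⟨(⟨q, hqX⟩, false), fun h' => hqne (by rw [← h']), (Subtype.ext hqe).symm⟩
  · have : classPairs G V' W = ∅ := Set.not_nonempty_iff_eq_empty.1 fun hne => hXe hne.to_subtype
    rw [this, Set.ncard_empty]
    omega

/-- The bound for all `W` with at least three elements, written `n + 3` for the induction; a vertex
on at most one pair is deleted. -/
lemma classPairs_bound {V : Type*} [Fintype V] (G : SimpleGraph V) {ρ : V → ℝ × ℝ}
    (h : IsPlanarDrawing G ρ) (hx : Function.Injective fun v => (ρ v).1)
    (V' : Finset V) (n : ℕ) : ∀ W : Finset V, W ⊆ V' → W.card = n + 3 →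
      (classPairs G V' W).ncard + 6 ≤ 3 * (n + 3) := by
  classical
  induction n with
  | zero =>
    intro W _ hcard
    have hsub : classPairs G V' W ⊆ ↑(W.offDiag.image Sym2.mk.uncurry) := by
      rintro _ ⟨v, w, hvw, rfl, hv, hw, -⟩
      simp only [Finset.coe_image, Set.mem_image, Finset.mem_coe, Finset.mem_offDiag]
      exact ⟨(v, w), ⟨hv, hw, hvw⟩, rfl⟩
    have := Set.ncard_le_ncard hsub
    rw [Set.ncard_coe_finset, Sym2.card_image_offDiag, hcard] at this
    have h3 : Nat.choose (0 + 3) 2 = 3 := rfl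
    omega
  | succ n ih =>
    intro W hW hcard
    by_cases hdeg : ∀ v ∈ W, 2 ≤ {q ∈ classPairs G V' W | v ∈ q}.ncard
    · have := classPairs_core G h hx V' W hW (by omega) hdeg
      rwa [hcard] at this
    · push Not at hdeg
      obtain ⟨v, hv, hlt⟩ := hdeg
      have h1 := ih (W.erase v) ((Finset.erase_subset _ _).trans hW)
        (by rw [Finset.card_erase_of_mem hv]; omega)
      have hsub : classPairs G V' W ⊆
          classPairs G V' (W.erase v) ∪ {q ∈ classPairs G V' W | v ∈ q} := by
        intro q hq
        by_cases hvq : v ∈ q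
        · exact Or.inr ⟨hq, hvq⟩
        · obtain ⟨a, b, hab, rfl, ha, hb, hy⟩ := hq
          rw [Sym2.mem_iff, not_or] at hvq
          exact Or.inl ⟨a, b, hab, rfl, Finset.mem_erase.2 ⟨Ne.symm hvq.1, ha⟩,
            Finset.mem_erase.2 ⟨Ne.symm hvq.2, hb⟩, hy⟩
      have h2 := (Set.ncard_le_ncard hsub).trans (Set.ncard_union_le _ _)
      omega

/-- if `V'` is a vertex cover of size `k ≥ 3` of a graph admitting a planar
straight-line drawing, then the number of 2-element subsets `{v, w}` of `V'` that occur as the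
exact neighborhood of some vertex outside `V'` is at most `3k − 6`. -/
theorem two_class_pairs_bound {V : Type*} [Fintype V] (G : SimpleGraph V)
    (hG : ∃ ρ : V → ℝ × ℝ, IsPlanarDrawing G ρ)
    (V' : Finset V) (hvc : ∀ ⦃u v : V⦄, G.Adj u v → u ∈ V' ∨ v ∈ V')
    (k : ℕ) (hk : V'.card = k) (hk3 : 3 ≤ k) :
    ({q : Sym2 V | ∃ v w : V, v ≠ w ∧ q = s(v, w) ∧ v ∈ V' ∧ w ∈ V' ∧
        ∃ x : V, x ∉ V' ∧ G.neighborSet x = {v, w}}).ncard ≤ 3 * k - 6 := by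
  obtain ⟨ρ₀, hρ₀⟩ := hG
  obtain ⟨ρ, hρ, hx⟩ := exists_generic_drawing hρ₀
  have := classPairs_bound G hρ hx V' (k - 3) V' (Finset.Subset.refl _) (by omega)
  change (classPairs G V' V').ncard ≤ _
  omega
end
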